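/- arXiv:0807.0706 — 3 statements merged into one kernel-verified Lean document; each statement's English description precedes it below -/
import Mathlib

section
/- Let R be a commutative noetherian ring and M an R-module. Then Ext^1_R(F, M) = 0 for every flat R-module F if and only if Ext^i_R(F, M) = 0 for every flat R-module F and every integer i ≥ 1. -/
/-!
Let `R` be a commutative noetherian ring and `M` an `R`-module. Then
`Ext¹_R(F, M) = 0` for every flat `R`-module `F` if and only if
`Ext^i_R(F, M) = 0` for every flat `R`-module `F` and every `i ≥ 1`.
-/

universe u

open CategoryTheory

attribute [local instance] HasDerivedCategory.standard
attribute [local instance] CategoryTheory.hasExt_of_hasDerivedCategory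

set_option synthInstance.maxHeartbeats 1000000
set_option maxHeartbeats 1000000

/-!
Dimension shifting: the kernel `K` of a surjection `Q ↠ F` from a projective onto a flat module is
again flat, and `Ext^n(K, M) → Ext^{n+1}(F, M)` is surjective because `Ext^{n+1}(Q, M) = 0`. The
vanishing of `Ext^n(-, M)` on all flat modules therefore propagates from `n` to `n + 1`.
-/

universe v w

section Ext

open Limits

variable {C : Type u} [Category.{v} C] [Abelian C]

theorem exists_shortExact_projective_X₂ [EnoughProjectives C] (X : C) :
    ∃ S : ShortComplex C, S.ShortExact ∧ Projective S.X₂ ∧ S.X₃ = X :=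
  ⟨.mk (kernel.ι (Projective.π X)) (Projective.π X) (kernel.condition _),
    { exact := ShortComplex.exact_kernel _ }, inferInstanceAs (Projective (Projective.over X)), rfl⟩

variable [HasExt.{w} C]

theorem subsingleton_ext_succ_of_shortExact {S : ShortComplex C} (hS : S.ShortExact) (Y : C)
    (n : ℕ) (h₁ : Subsingleton (Abelian.Ext S.X₁ Y n))
    (h₂ : Subsingleton (Abelian.Ext S.X₂ Y (n + 1))) :
    Subsingleton (Abelian.Ext S.X₃ Y (n + 1)) := by
  refine subsingleton_of_forall_eq 0 fun x₃ ↦ ?_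
  obtain ⟨x₁, rfl⟩ :=
    Abelian.Ext.contravariant_sequence_exact₃ hS Y x₃ (Subsingleton.elim _ _) (add_comm 1 n)
  rw [Subsingleton.elim x₁ 0, Abelian.Ext.comp_zero]

theorem subsingleton_ext_of_le_of_syzygies [EnoughProjectives C] {P : ObjectProperty C}
    (hP : ∀ S : ShortComplex C, S.ShortExact → Projective S.X₂ → P S.X₃ → P S.X₁) {Y : C} {n : ℕ}
    (h : ∀ X, P X → Subsingleton (Abelian.Ext X Y n)) {X : C} (hX : P X) {i : ℕ} (hi : n ≤ i) :
    Subsingleton (Abelian.Ext X Y i) := by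
  induction i, hi using Nat.le_induction generalizing X with
  | base => exact h X hX
  | succ i _ ih =>
    obtain ⟨S, hS, hproj, rfl⟩ := exists_shortExact_projective_X₂ X
    exact subsingleton_ext_succ_of_shortExact hS Y i (ih (hP S hS hproj hX))
      (Abelian.Ext.subsingleton_of_projective _ _ i)

end Ext

theorem flat_of_injective_of_surjective_of_exact {R M N P : Type*} [CommRing R]
    [AddCommGroup M] [Module R M] [AddCommGroup N] [Module R N] [AddCommGroup P] [Module R P]
    [Module.Flat R N] [Module.Flat R P] {f : M →ₗ[R] N} {g : N →ₗ[R] P}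
    (hf : Function.Injective f) (hg : Function.Surjective g) (hfg : Function.Exact f g) :
    Module.Flat R M := by
  refine Module.Flat.iff_rTensor_injective'.mpr fun I ↦ ?_
  have hfI : Function.Injective (f.lTensor I) :=
    LinearMap.lTensor_injective_of_exact_of_flat g hg f hf hfg I
  have hIN : Function.Injective (I.subtype.rTensor N) :=
    Module.Flat.rTensor_preserves_injective_linearMap _ I.injective_subtype
  have hsquare : f.lTensor R ∘ₗ I.subtype.rTensor M = I.subtype.rTensor N ∘ₗ f.lTensor I := by
    rw [LinearMap.lTensor_comp_rTensor, LinearMap.rTensor_comp_lTensor]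
  refine Function.Injective.of_comp (f := f.lTensor R) ?_
  rw [← LinearMap.coe_comp, hsquare]
  exact hIN.comp hfI

theorem flat_X₁_of_shortExact {R : Type u} [CommRing R] {S : ShortComplex (ModuleCat.{v} R)}
    (hS : S.ShortExact) [Module.Flat R S.X₂] [Module.Flat R S.X₃] : Module.Flat R S.X₁ :=
  flat_of_injective_of_surjective_of_exact hS.moduleCat_injective_f hS.moduleCat_surjective_g
    ((ShortComplex.ShortExact.moduleCat_exact_iff_function_exact S).mp hS.exact)

theorem ext_one_vanishing_iff_ext_vanishing_of_flat_general
    (R : Type u) [CommRing R] [Small.{v} R] [HasExt.{w} (ModuleCat.{v} R)]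
    (M : Type v) [AddCommGroup M] [Module R M] :
    (∀ (F : Type v) [AddCommGroup F] [Module R F], Module.Flat R F →
        Subsingleton (Abelian.Ext (ModuleCat.of R F) (ModuleCat.of R M) 1)) ↔
      (∀ (F : Type v) [AddCommGroup F] [Module R F], Module.Flat R F →
        ∀ i : ℕ, 1 ≤ i →
          Subsingleton (Abelian.Ext (ModuleCat.of R F) (ModuleCat.of R M) i)) := by
  refine ⟨fun h F _ _ hF i hi ↦ ?_, fun h F _ _ hF ↦ h F hF 1 le_rfl⟩
  have flat_syzygy (S : ShortComplex (ModuleCat.{v} R)) (hS : S.ShortExact)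
      (_ : Projective S.X₂) (_ : Module.Flat R S.X₃) : Module.Flat R S.X₁ :=
    flat_X₁_of_shortExact hS
  exact subsingleton_ext_of_le_of_syzygies (P := fun X : ModuleCat.{v} R ↦ Module.Flat R X)
    flat_syzygy (fun X ↦ h X) hF hi

theorem ext_one_vanishing_iff_ext_vanishing_of_flat
    (R : Type u) [CommRing R] [IsNoetherianRing R]
    (M : Type u) [AddCommGroup M] [Module R M] :
    (∀ (F : Type u) [AddCommGroup F] [Module R F], Module.Flat R F →
        Subsingleton (Abelian.Ext (ModuleCat.of R F) (ModuleCat.of R M) 1)) ↔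
      (∀ (F : Type u) [AddCommGroup F] [Module R F], Module.Flat R F →
        ∀ i : ℕ, 1 ≤ i →
          Subsingleton (Abelian.Ext (ModuleCat.of R F) (ModuleCat.of R M) i)) :=
  ext_one_vanishing_iff_ext_vanishing_of_flat_general R M
end

section
/- Let φ : R → S be a faithfully flat homomorphism of commutative noetherian rings and assume the Krull dimension of S is finite. An R-module M is Gorenstein injective if and only if the S-module Hom_R(S, M) is Gorenstein injective and Ext^i_R(F, M) = 0 for every flat R-module F and all i ≥ 1. -/
/-!
Let `φ : R → S` be a faithfully flat homomorphism of commutative noetherian rings with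
`dim S < ∞`. An `R`-module `M` is Gorenstein injective if and only if the `S`-module
`Hom_R(S, M)` (with `S`-action `(s • f) t = f (s * t)`) is Gorenstein injective and
`Ext^i_R(F, M) = 0` for every flat `R`-module `F` and all `i ≥ 1`.
-/

universe u

open CategoryTheory

/-- A witness that `J` is a Gorenstein injective `R`-module: an exact complex `I` of
injective `R`-modules (with differentials `d i : I (i+1) →ₗ[R] I i`) such that
`Hom_R(E, I)` is exact for every injective `R`-module `E`, together with an
isomorphism `J ≅ ker (I 0 → I (-1))`. -/
structure GorensteinInjectiveWitness (R : Type u) [CommRing R]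
    (J : Type u) [AddCommGroup J] [Module R J] : Type (u + 1) where
  I : ℤ → Type u
  [acg : ∀ i, AddCommGroup (I i)]
  [mod : ∀ i, Module R (I i)]
  inj : ∀ i, Module.Injective R (I i)
  d : ∀ i : ℤ, I (i + 1) →ₗ[R] I i
  d_comp_d : ∀ i : ℤ, (d i).comp (d (i + 1)) = 0
  exact : ∀ i : ℤ, LinearMap.ker (d i) = LinearMap.range (d (i + 1))
  hom_exact : ∀ (E : Type u) [AddCommGroup E] [Module R E], Module.Injective R E →
    ∀ (i : ℤ) (f : E →ₗ[R] I (i + 1)), (d i).comp f = 0 →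
      ∃ g : E →ₗ[R] I (i + 1 + 1), (d (i + 1)).comp g = f
  ker_iso : Nonempty (J ≃ₗ[R] LinearMap.ker (d (-1)))

/-- `J` is a Gorenstein injective `R`-module. -/
def IsGorensteinInjective (R : Type u) [CommRing R]
    (J : Type u) [AddCommGroup J] [Module R J] : Prop :=
  Nonempty (GorensteinInjectiveWitness R J)

section HomModule

variable (R S : Type u) [CommRing R] [CommRing S] [Algebra R S]
variable (E : Type u) [AddCommGroup E] [Module R E]

/-- The scalar action of `S` on `Hom_R(S, E)` given by `(s • f) t = f (s * t)`. -/
noncomputable instance homSMul : SMul S (S →ₗ[R] E) :=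
  ⟨fun s f => f.comp (LinearMap.mulLeft R s)⟩

lemma homSMul_apply (s : S) (f : S →ₗ[R] E) (t : S) : (s • f) t = f (s * t) := rfl

/-- The `S`-module structure on `Hom_R(S, E)` given by `(s • f) t = f (s * t)`. -/
noncomputable instance homModule : Module S (S →ₗ[R] E) where
  one_smul f := LinearMap.ext fun t => by rw [homSMul_apply, one_mul]
  mul_smul s s' f := LinearMap.ext fun t => by
    rw [homSMul_apply, homSMul_apply, homSMul_apply, mul_assoc, mul_left_comm]
  smul_zero s := LinearMap.ext fun t => by rw [homSMul_apply]; rfl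
  smul_add s f g := LinearMap.ext fun t => by
    rw [homSMul_apply, LinearMap.add_apply, LinearMap.add_apply, homSMul_apply, homSMul_apply]
  add_smul s s' f := LinearMap.ext fun t => by
    rw [homSMul_apply, LinearMap.add_apply, homSMul_apply, homSMul_apply, add_mul, map_add]
  zero_smul f := LinearMap.ext fun t => by
    rw [homSMul_apply, zero_mul, map_zero]; rfl

end HomModule

attribute [local instance] HasDerivedCategory.standard
attribute [local instance] CategoryTheory.hasExt_of_hasDerivedCategory

set_option synthInstance.maxHeartbeats 1000000
set_option maxHeartbeats 1000000

/-!
A module is Gorenstein injective exactly when it lies in a class `𝒢` of modules that are acyclic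
for injectives, every member of `𝒢` being a quotient of an injective module by a member of `𝒢`.

Members of such a class are cotorsion. If `Ext¹(-, K) = 0` on `A` and `B` for all `K` in `𝒢`, then
the same holds on the cokernel of an injection `A → B`: extend maps `A → K` after lifting them to
an injective cover of `K`. This supplies the successor steps in Eklof's lemma, and a flat module is
the cokernel of a locally split inclusion into a free module, whose source has a filtration with
countably generated, hence projective, pieces at the bottom of an induction on cardinality.

For `M` cotorsion, `Hom_R(S, -)` preserves an injective coresolution of `M`, so dimension shifting
and the adjunction give `Ext_S(V, Hom_R(S, M)) = 0` if and only if `Ext_R(V, M) = 0` for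
`S`-modules `V`. By faithful flatness an injective `R`-module `V` is a retract of `Hom_R(S, V)`,
so acyclicity for injectives passes in both directions. Injective syzygies pass forward along
`Hom_R(S, -)`. Conversely, the adjoint `U → M` of an injective cover `U → Hom_R(S, M)` is surjective
with cotorsion kernel because maps from a flat `F` to `M` extend along `F → S ⊗ F`.
-/

/-! ### Short exact sequences -/

/-- The sequence `0 → A → B → C → 0` given by `a : A →ₗ[R] B` and `b : B →ₗ[R] C` is exact. -/
structure IsShortExact {R A B C : Type*} [CommRing R] [AddCommGroup A] [AddCommGroup B]
    [AddCommGroup C] [Module R A] [Module R B] [Module R C]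
    (a : A →ₗ[R] B) (b : B →ₗ[R] C) : Prop where
  injective : Function.Injective a
  exact : Function.Exact a b
  surjective : Function.Surjective b

namespace IsShortExact

variable {R A B C V : Type*} [CommRing R] [AddCommGroup A] [AddCommGroup B] [AddCommGroup C]
  [AddCommGroup V] [Module R A] [Module R B] [Module R C] [Module R V]
  {a : A →ₗ[R] B} {b : B →ₗ[R] C}

lemma of_surjective (hb : Function.Surjective b) :
    IsShortExact (LinearMap.ker b).subtype b :=
  ⟨Subtype.val_injective, LinearMap.exact_subtype_ker_map b, hb⟩

lemma of_injective (ha : Function.Injective a) :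
    IsShortExact a (LinearMap.range a).mkQ :=
  ⟨ha, LinearMap.exact_map_mkQ_range a, Submodule.mkQ_surjective _⟩

lemma exists_comp_eq_of_comp_eq_zero (h : IsShortExact a b) (f : V →ₗ[R] B) (hf : b ∘ₗ f = 0) :
    ∃ g : V →ₗ[R] A, a ∘ₗ g = f := by
  let e := LinearEquiv.ofInjective a h.injective
  let f' := f.codRestrict (LinearMap.range a) fun v => (h.exact _).1 (LinearMap.congr_fun hf v)
  exact ⟨e.symm.toLinearMap ∘ₗ f',
    LinearMap.ext fun v => congrArg Subtype.val (e.apply_symm_apply (f' v))⟩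

lemma exists_section_iff_exists_retraction (h : IsShortExact a b) :
    (∃ s, b ∘ₗ s = LinearMap.id) ↔ ∃ r, r ∘ₗ a = LinearMap.id :=
  (h.exact.split_tfae h.injective h.surjective).out 0 1

lemma characterModule_dual (h : IsShortExact a b) :
    IsShortExact (CharacterModule.dual b) (CharacterModule.dual a) where
  injective := CharacterModule.dual_injective_of_surjective b h.surjective
  exact c := by
    refine ⟨fun hc => ?_, ?_⟩
    · obtain ⟨g, hg⟩ := (LinearMap.exact_lcomp_of_exact_of_surjective
        (f := a.toAddMonoidHom.toIntLinearMap) (g := b.toAddMonoidHom.toIntLinearMap)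
        (AddCircle (1 : ℚ)) h.exact h.surjective c.toIntLinearMap).1
        (LinearMap.ext fun x => DFunLike.congr_fun hc x)
      exact ⟨g.toAddMonoidHom, DFunLike.ext _ _ fun x => LinearMap.congr_fun hg x⟩
    · rintro ⟨g, rfl⟩
      exact DFunLike.ext _ _ fun x => (congrArg g (h.exact.apply_apply_eq_zero x)).trans g.map_zero
  surjective := CharacterModule.dual_surjective_of_injective a h.injective

lemma prod_fst_id (h : IsShortExact a b) :
    IsShortExact (LinearMap.inl R B V ∘ₗ a) (b.prodMap (LinearMap.id : V →ₗ[R] V)) where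
  injective := LinearMap.inl_injective.comp h.injective
  exact := by
    rintro ⟨x, v⟩
    simp only [LinearMap.prodMap_apply, LinearMap.id_apply, Prod.mk_eq_zero, h.exact x]
    constructor
    · rintro ⟨⟨y, rfl⟩, rfl⟩
      exact ⟨y, rfl⟩
    · rintro ⟨y, hy⟩
      exact ⟨⟨y, congrArg Prod.fst hy⟩, (congrArg Prod.snd hy).symm⟩
  surjective := h.surjective.prodMap Function.surjective_id

/-- If `φ` is a lift of `b` along `q` inducing `ψ` on kernels, then `K × B`, being the pullback of
`b` and `q`, is also an extension of `U` by `A`. -/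
lemma coprod_lift {K U : Type*} [AddCommGroup K] [AddCommGroup U] [Module R K] [Module R U]
    {i : K →ₗ[R] U} {q : U →ₗ[R] C} (h : IsShortExact a b) (hiq : IsShortExact i q)
    {φ : B →ₗ[R] U} {ψ : A →ₗ[R] K} (hφ : q ∘ₗ φ = b) (hψ : i ∘ₗ ψ = φ ∘ₗ a) :
    IsShortExact ((-ψ).prod a) (i.coprod φ) where
  injective _ _ hxy := h.injective (congrArg Prod.snd hxy)
  exact := by
    rintro ⟨k, x⟩
    rw [LinearMap.coprod_apply]
    constructor
    · intro hkx
      have hx : b x = 0 := by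
        rw [← hφ, LinearMap.comp_apply, ← neg_eq_of_add_eq_zero_right hkx, map_neg,
          hiq.exact.apply_apply_eq_zero, neg_zero]
      obtain ⟨y, rfl⟩ := (h.exact x).1 hx
      refine ⟨y, Prod.ext (hiq.injective ?_) rfl⟩
      rw [eq_neg_of_add_eq_zero_left hkx]
      exact (map_neg i (ψ y)).trans (congrArg Neg.neg (LinearMap.congr_fun hψ y))
    · rintro ⟨y, hy⟩
      obtain ⟨rfl, rfl⟩ := Prod.ext_iff.1 hy
      exact (congrArg (· + φ (a y)) ((map_neg i (ψ y)).trans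
        (congrArg Neg.neg (LinearMap.congr_fun hψ y)))).trans (neg_add_cancel _)
  surjective u := by
    obtain ⟨x, hx⟩ := h.surjective (q u)
    obtain ⟨k, hk⟩ := (hiq.exact (u - φ x)).1 (by
      rw [map_sub, ← hx, ← hφ, LinearMap.comp_apply, sub_self])
    exact ⟨(k, x), by rw [LinearMap.coprod_apply, hk, sub_add_cancel]⟩

lemma exists_ker_comp {K Q : Type*} [AddCommGroup K] [AddCommGroup Q] [Module R K] [Module R Q]
    {k : K →ₗ[R] Q} {p : Q →ₗ[R] B} (h : IsShortExact a b) (hkp : IsShortExact k p) :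
    ∃ (k' : K →ₗ[R] LinearMap.ker (b ∘ₗ p)) (p' : LinearMap.ker (b ∘ₗ p) →ₗ[R] A),
      IsShortExact k' p' := by
  obtain ⟨p', hp'⟩ := h.exists_comp_eq_of_comp_eq_zero (p ∘ₗ (LinearMap.ker (b ∘ₗ p)).subtype)
    (LinearMap.ext fun x => x.2)
  have hp' (x) : a (p' x) = p x := LinearMap.congr_fun hp' x
  have hk (x) : k x ∈ LinearMap.ker (b ∘ₗ p) :=
    (congrArg b (hkp.exact.apply_apply_eq_zero x)).trans (map_zero b)
  refine ⟨k.codRestrict _ hk, p', fun x y hxy => hkp.injective (congrArg Subtype.val hxy),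
    fun x => ?_, fun y => ?_⟩
  · rw [← map_eq_zero_iff a h.injective, hp', hkp.exact]
    exact exists_congr fun y => (Subtype.ext_iff (a1 := k.codRestrict _ hk y)).symm
  · obtain ⟨x, hx⟩ := hkp.surjective (a y)
    have hx' : x ∈ LinearMap.ker (b ∘ₗ p) :=
      (congrArg b hx).trans (h.exact.apply_apply_eq_zero y)
    exact ⟨⟨x, hx'⟩, h.injective ((hp' _).trans hx)⟩

end IsShortExact

section Injective

variable {R : Type u} [CommRing R] {E M : Type u} [AddCommGroup E] [AddCommGroup M]
  [Module R E] [Module R M]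

lemma injective_of_retract (hE : Module.Injective R E) (i : M →ₗ[R] E)
    (r : E →ₗ[R] M) (h : r ∘ₗ i = LinearMap.id) : Module.Injective R M where
  out X Y _ _ _ _ f hf g := by
    obtain ⟨k, hk⟩ := hE.out f hf (i ∘ₗ g)
    exact ⟨r ∘ₗ k, fun x => by
      simpa [hk] using LinearMap.congr_fun h (g x)⟩

lemma injective_prod (hE : Module.Injective R E) (hM : Module.Injective R M) :
    Module.Injective R (E × M) where
  out X Y _ _ _ _ f hf g := by
    obtain ⟨k, hk⟩ := hE.out f hf (LinearMap.fst R E M ∘ₗ g)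
    obtain ⟨l, hl⟩ := hM.out f hf (LinearMap.snd R E M ∘ₗ g)
    exact ⟨k.prod l, fun x => Prod.ext (hk x) (hl x)⟩

lemma exists_injective_embedding (R M : Type u) [CommRing R] [AddCommGroup M] [Module R M] :
    ∃ (E : ModuleCat.{u} R) (a : M →ₗ[R] E), Module.Injective R E ∧ Function.Injective a := by
  obtain ⟨⟨E, hE, f, hf⟩⟩ := EnoughInjectives.presentation (ModuleCat.of R M)
  exact ⟨E, f.hom, (Module.injective_iff_injective_object R E).2 hE,
    (ModuleCat.mono_iff_injective f).1 hf⟩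

end Injective

/-! ### Vanishing of Ext -/

/-- `Ext^n_R(A, B) = 0`. -/
abbrev ExtVanishes (R A B : Type u) [CommRing R] [AddCommGroup A] [AddCommGroup B]
    [Module R A] [Module R B] (n : ℕ) : Prop :=
  Subsingleton (Abelian.Ext (ModuleCat.of R A) (ModuleCat.of R B) n)

section Ext

open Abelian

variable {R : Type u} [CommRing R] {A B C V W : Type u} [AddCommGroup A] [AddCommGroup B]
  [AddCommGroup C] [AddCommGroup V] [AddCommGroup W] [Module R A] [Module R B] [Module R C]
  [Module R V] [Module R W] {a : A →ₗ[R] B} {b : B →ₗ[R] C} {n : ℕ}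

namespace ExtVanishes

lemma of_projective (hV : Module.Projective R V) (n : ℕ) : ExtVanishes R V W (n + 1) :=
  have := (IsProjective.iff_projective V).1 hV
  Ext.subsingleton_of_projective _ _ n

lemma of_injective (hW : Module.Injective R W) (n : ℕ) : ExtVanishes R V W (n + 1) :=
  have := (Module.injective_iff_injective_object R W).1 hW
  Ext.subsingleton_of_injective _ _ n

lemma of_retract_left (hV : ExtVanishes R V W n) (i : A →ₗ[R] V) (r : V →ₗ[R] A)
    (h : r ∘ₗ i = LinearMap.id) : ExtVanishes R A W n := by
  refine subsingleton_of_forall_eq 0 fun x => ?_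
  have hx : (Ext.mk₀ (ModuleCat.ofHom r)).comp x (zero_add n) = 0 := Subsingleton.elim _ _
  rw [← Ext.mk₀_id_comp x, ← ModuleCat.ofHom_id, ← h, ModuleCat.ofHom_comp,
    ← Ext.mk₀_comp_mk₀_assoc, hx, Ext.comp_zero]

lemma of_retract_right (hW : ExtVanishes R V W n) (i : A →ₗ[R] W) (r : W →ₗ[R] A)
    (h : r ∘ₗ i = LinearMap.id) : ExtVanishes R V A n := by
  refine subsingleton_of_forall_eq 0 fun x => ?_
  have hx : x.comp (Ext.mk₀ (ModuleCat.ofHom i)) (add_zero n) = 0 := Subsingleton.elim _ _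
  rw [← Ext.comp_mk₀_id x, ← ModuleCat.ofHom_id, ← h, ModuleCat.ofHom_comp,
    ← Ext.mk₀_comp_mk₀, ← Ext.comp_assoc_of_third_deg_zero, hx, Ext.zero_comp]

end ExtVanishes

namespace IsShortExact

lemma toShortExact (h : IsShortExact a b) :
    (ModuleCat.shortComplexOfCompEqZero a b h.exact.linearMap_comp_eq_zero).ShortExact :=
  ModuleCat.shortComplex_shortExact _ h.exact h.injective h.surjective

lemma extVanishes_covariant₁ (h : IsShortExact a b) (hC : ExtVanishes R V C n)
    (hB : ExtVanishes R V B (n + 1)) : ExtVanishes R V A (n + 1) := by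
  refine subsingleton_of_forall_eq 0 fun x => ?_
  obtain ⟨y, rfl⟩ := Ext.covariant_sequence_exact₁ _ h.toShortExact x (Subsingleton.elim _ _) rfl
  rw [show y = 0 from Subsingleton.elim (α := Ext _ (ModuleCat.of R C) n) _ _, Ext.zero_comp]

lemma extVanishes_covariant₃ (h : IsShortExact a b) (hB : ExtVanishes R V B n)
    (hA : ExtVanishes R V A (n + 1)) : ExtVanishes R V C n := by
  refine subsingleton_of_forall_eq 0 fun x => ?_
  obtain ⟨y, rfl⟩ := Ext.covariant_sequence_exact₃ _ h.toShortExact x rfl (Subsingleton.elim _ _)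
  rw [show y = 0 from Subsingleton.elim (α := Ext _ (ModuleCat.of R B) n) _ _, Ext.zero_comp]

lemma extVanishes_contravariant₃ (h : IsShortExact a b) (hA : ExtVanishes R A W n)
    (hB : ExtVanishes R B W (n + 1)) : ExtVanishes R C W (n + 1) := by
  refine subsingleton_of_forall_eq 0 fun x => ?_
  obtain ⟨y, rfl⟩ := Ext.contravariant_sequence_exact₃ h.toShortExact _ x (Subsingleton.elim _ _)
    (add_comm 1 n)
  rw [show y = 0 from Subsingleton.elim (α := Ext (ModuleCat.of R A) _ n) _ _, Ext.comp_zero]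

lemma exists_lift (h : IsShortExact a b) (hA : ExtVanishes R V A 1) (f : V →ₗ[R] C) :
    ∃ g : V →ₗ[R] B, b ∘ₗ g = f := by
  obtain ⟨x, hx⟩ := Ext.covariant_sequence_exact₃ _ h.toShortExact
    (Ext.mk₀ (ModuleCat.ofHom f)) rfl (Subsingleton.elim _ _)
  obtain ⟨g, rfl⟩ := (Ext.mk₀_bijective _ _).2 x
  rw [Ext.mk₀_comp_mk₀] at hx
  exact ⟨g.hom, congrArg ModuleCat.Hom.hom ((Ext.mk₀_bijective _ _).1 hx)⟩

lemma exists_extension (h : IsShortExact a b) (hC : ExtVanishes R C W 1) (f : A →ₗ[R] W) :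
    ∃ g : B →ₗ[R] W, g ∘ₗ a = f := by
  obtain ⟨x, hx⟩ := Ext.contravariant_sequence_exact₁ h.toShortExact _
    (Ext.mk₀ (ModuleCat.ofHom f)) (add_comm 1 0) (Subsingleton.elim _ _)
  obtain ⟨g, rfl⟩ := (Ext.mk₀_bijective _ _).2 x
  rw [Ext.mk₀_comp_mk₀] at hx
  exact ⟨g.hom, congrArg ModuleCat.Hom.hom ((Ext.mk₀_bijective _ _).1 hx)⟩

lemma extVanishes_succ_iff (h : IsShortExact a b) (hB : Module.Injective R B) :
    ExtVanishes R V A (n + 2) ↔ ExtVanishes R V C (n + 1) :=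
  ⟨h.extVanishes_covariant₃ (.of_injective hB n),
    fun hC => h.extVanishes_covariant₁ hC (.of_injective hB (n + 1))⟩

lemma extVanishes_one_iff_forall_exists_lift (h : IsShortExact a b) (hB : ExtVanishes R V B 1) :
    ExtVanishes R V A 1 ↔ ∀ f : V →ₗ[R] C, ∃ g : V →ₗ[R] B, b ∘ₗ g = f := by
  refine ⟨h.exists_lift, fun H => subsingleton_of_forall_eq 0 fun x => ?_⟩
  obtain ⟨y, rfl⟩ := Ext.covariant_sequence_exact₁ _ h.toShortExact x (Subsingleton.elim _ _)
    (zero_add 1)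
  obtain ⟨f, rfl⟩ := (Ext.mk₀_bijective _ _).2 y
  obtain ⟨g, hg⟩ := H f.hom
  obtain rfl : ModuleCat.ofHom g ≫ ModuleCat.ofHom b = f := ModuleCat.hom_ext hg
  rw [← Ext.mk₀_comp_mk₀, Ext.comp_assoc_of_second_deg_zero, h.toShortExact.comp_extClass,
    Ext.comp_zero]

lemma extVanishes_one_of_forall_exists_extension (h : IsShortExact a b)
    (hB : ExtVanishes R B W 1) (H : ∀ f : A →ₗ[R] W, ∃ g : B →ₗ[R] W, g ∘ₗ a = f) :
    ExtVanishes R C W 1 := by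
  refine subsingleton_of_forall_eq 0 fun x => ?_
  obtain ⟨y, rfl⟩ := Ext.contravariant_sequence_exact₃ h.toShortExact _ x (Subsingleton.elim _ _)
    (add_comm 1 0)
  obtain ⟨f, rfl⟩ := (Ext.mk₀_bijective _ _).2 y
  obtain ⟨g, hg⟩ := H f.hom
  obtain rfl : ModuleCat.ofHom a ≫ ModuleCat.ofHom g = f := ModuleCat.hom_ext hg
  rw [← Ext.mk₀_comp_mk₀]
  exact h.toShortExact.extClass_comp_assoc _

end IsShortExact

end Ext

/-! ### Cotorsion modules -/

/-- A module is *cotorsion* if `Ext¹` from every flat module to it vanishes. -/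
def IsCotorsion (R : Type u) [CommRing R] (M : Type u) [AddCommGroup M] [Module R M] : Prop :=
  ∀ (F : Type u) [AddCommGroup F] [Module R F], Module.Flat R F → ExtVanishes R F M 1

section Cotorsion

variable {R : Type u} [CommRing R] {A B C F M : Type u} [AddCommGroup A] [AddCommGroup B]
  [AddCommGroup C] [AddCommGroup F] [AddCommGroup M] [Module R A] [Module R B] [Module R C]
  [Module R F] [Module R M] {a : A →ₗ[R] B} {b : B →ₗ[R] C}

lemma IsShortExact.flat_left (h : IsShortExact a b) (hB : Module.Flat R B)
    (hC : Module.Flat R C) : Module.Flat R A := by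
  rw [Module.Flat.iff_characterModule_injective] at hB hC ⊢
  obtain ⟨r, hr⟩ := hC.out _ h.characterModule_dual.injective LinearMap.id
  obtain ⟨s, hs⟩ := h.characterModule_dual.exists_section_iff_exists_retraction.2
    ⟨r, LinearMap.ext hr⟩
  exact injective_of_retract hB s _ hs

namespace IsCotorsion

lemma extVanishes (hM : IsCotorsion R M) (hF : Module.Flat R F) (n : ℕ) :
    ExtVanishes R F M (n + 1) := by
  induction n generalizing F with
  | zero => exact hM F hF
  | succ n ih =>
    have h := IsShortExact.of_surjective (B := F →₀ R) (b := Finsupp.linearCombination R id)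
      (Finsupp.linearCombination_id_surjective R F)
    exact h.extVanishes_contravariant₃ (ih (h.flat_left inferInstance hF))
      (.of_projective inferInstance _)

lemma cosyzygy (hA : IsCotorsion R A) (h : IsShortExact a b) (hB : Module.Injective R B) :
    IsCotorsion R C := fun _ _ _ hF =>
  h.extVanishes_covariant₃ (.of_injective hB 0) (hA.extVanishes hF 1)

end IsCotorsion

end Cotorsion

/-! ### Gorenstein injective modules -/

/-- `Ext^i` from every injective module to `N` vanishes in positive degrees `i`. -/
def IsInjAcyclic (R : Type u) [CommRing R] (N : Type u) [AddCommGroup N] [Module R N] : Prop :=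
  ∀ (V : Type u) [AddCommGroup V] [Module R V], Module.Injective R V →
    ∀ i : ℕ, ExtVanishes R V N (i + 1)

/-- Every member `N` of the class `𝒢` is a quotient of an injective module by a member of `𝒢`;
iterating, `N` has a left resolution by injective modules whose syzygies all belong to `𝒢`. -/
def HasInjectiveSyzygies {R : Type u} [CommRing R] (𝒢 : ModuleCat.{u} R → Prop) : Prop :=
  ∀ N, 𝒢 N → ∃ (K E : ModuleCat.{u} R) (a : K →ₗ[R] E) (b : E →ₗ[R] N),
    IsShortExact a b ∧ Module.Injective R E ∧ 𝒢 K

section GorensteinInjective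

variable {R : Type u} [CommRing R] {A B C M : Type u} [AddCommGroup A] [AddCommGroup B]
  [AddCommGroup C] [AddCommGroup M] [Module R A] [Module R B] [Module R C] [Module R M]
  {a : A →ₗ[R] B} {b : B →ₗ[R] C}

lemma IsInjAcyclic.cosyzygy (hA : IsInjAcyclic R A) (h : IsShortExact a b)
    (hB : Module.Injective R B) : IsInjAcyclic R C := fun V _ _ hV i =>
  h.extVanishes_covariant₃ (.of_injective hB i) (hA V hV (i + 1))

lemma IsInjAcyclic.of_linearEquiv (hB : IsInjAcyclic R B) (e : A ≃ₗ[R] B) :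
    IsInjAcyclic R A := fun V _ _ hV i =>
  (hB V hV i).of_retract_right e.toLinearMap e.symm.toLinearMap e.symm_comp

lemma exists_int_chain {α : Type*} {r : α → α → Prop} (hpred : ∀ x, ∃ y, r y x)
    (hsucc : ∀ x, ∃ y, r x y) (x : α) (k : ℤ) :
    ∃ z : ℤ → α, z k = x ∧ ∀ n, r (z (n + 1)) (z n) := by
  choose p hp using hpred
  choose s hs using hsucc
  let z : ℤ → α := fun
    | .ofNat n => p^[n] x
    | .negSucc n => s^[n + 1] x
  have hz : ∀ n, r (z (n + 1)) (z n)
    | .ofNat n => by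
      change r (p^[n + 1] x) (p^[n] x)
      rw [Function.iterate_succ_apply']
      exact hp _
    | .negSucc 0 => hs x
    | .negSucc (n + 1) => by
      change r (s^[n + 1] x) (s^[n + 2] x)
      rw [Function.iterate_succ_apply' s (n + 1)]
      exact hs _
  refine ⟨fun n => z (n - k), by simp [z], fun n => ?_⟩
  simpa only [sub_add_eq_add_sub] using hz (n - k)

/-- `M` belongs to a class of modules acyclic for injectives in which every member has an injective
syzygy. -/
def HasProperInjectiveResolution (R : Type u) [CommRing R] (M : Type u) [AddCommGroup M]
    [Module R M] : Prop :=
  ∃ 𝒢 : ModuleCat.{u} R → Prop, HasInjectiveSyzygies 𝒢 ∧ (∀ N, 𝒢 N → IsInjAcyclic R N) ∧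
    𝒢 (ModuleCat.of R M)

lemma hasInjectiveSyzygies_hasProperInjectiveResolution (R : Type u) [CommRing R] :
    HasInjectiveSyzygies fun N : ModuleCat.{u} R => HasProperInjectiveResolution R N := by
  rintro N ⟨𝒢, h𝒢, hacyc, hN⟩
  obtain ⟨K, E, a, b, h, hE, hK⟩ := h𝒢 N hN
  exact ⟨K, E, a, b, h, hE, 𝒢, h𝒢, hacyc, hK⟩

namespace HasProperInjectiveResolution

lemma isInjAcyclic : HasProperInjectiveResolution R M → IsInjAcyclic R M :=
  fun ⟨_, _, hacyc, hM⟩ => hacyc _ hM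

lemma cosyzygy (hA : HasProperInjectiveResolution R A) (h : IsShortExact a b)
    (hB : Module.Injective R B) : HasProperInjectiveResolution R C := by
  obtain ⟨𝒢, h𝒢, hacyc, hA⟩ := hA
  refine ⟨fun N => 𝒢 N ∨ N = ModuleCat.of R C, ?_, ?_, .inr rfl⟩
  · rintro N (hN | rfl)
    · obtain ⟨K, E, f, g, hfg, hE, hK⟩ := h𝒢 N hN
      exact ⟨K, E, f, g, hfg, hE, .inl hK⟩
    · exact ⟨ModuleCat.of R A, ModuleCat.of R B, a, b, h, hB, .inl hA⟩
  · rintro N (hN | rfl)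
    · exact hacyc N hN
    · exact (hacyc _ hA).cosyzygy h hB

lemma exists_cosyzygy (hM : HasProperInjectiveResolution R M) :
    ∃ (C E : ModuleCat.{u} R) (a : M →ₗ[R] E) (b : E →ₗ[R] C),
      IsShortExact a b ∧ Module.Injective R E ∧ HasProperInjectiveResolution R C := by
  obtain ⟨E, a, hE, ha⟩ := exists_injective_embedding R M
  have h := IsShortExact.of_injective ha
  exact ⟨ModuleCat.of R (E ⧸ LinearMap.range a), E, a, _, h, hE, hM.cosyzygy h hE⟩

end HasProperInjectiveResolution

section Witness

attribute [local instance] GorensteinInjectiveWitness.acg GorensteinInjectiveWitness.mod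

namespace GorensteinInjectiveWitness

lemma isShortExact (w : GorensteinInjectiveWitness R M) (n : ℤ) :
    IsShortExact (LinearMap.ker (w.d (n + 1))).subtype
      ((w.d (n + 1)).codRestrict (LinearMap.ker (w.d n))
        fun x => LinearMap.mem_ker.2 (LinearMap.congr_fun (w.d_comp_d n) x)) where
  injective := Subtype.val_injective
  exact := by
    rw [LinearMap.exact_iff, LinearMap.ker_codRestrict, Submodule.range_subtype]
  surjective := by
    rintro ⟨x, hx⟩
    rw [w.exact n] at hx
    obtain ⟨y, rfl⟩ := hx
    exact ⟨y, rfl⟩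

lemma isInjAcyclic_ker (w : GorensteinInjectiveWitness R M) (n : ℤ) :
    IsInjAcyclic R (LinearMap.ker (w.d n)) := by
  intro V _ _ hV i
  obtain ⟨m, rfl⟩ : ∃ m, n = m + 1 := ⟨n - 1, by ring⟩
  induction i generalizing m with
  | zero =>
    refine ((w.isShortExact m).extVanishes_one_iff_forall_exists_lift (.of_injective (w.inj _) 0)).2
      fun f => ?_
    obtain ⟨g, hg⟩ := w.hom_exact V hV m ((LinearMap.ker (w.d m)).subtype ∘ₗ f)
      (LinearMap.ext fun x => (f x).2)
    exact ⟨g, LinearMap.ext fun x => Subtype.ext (LinearMap.congr_fun hg x)⟩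
  | succ i ih =>
    obtain ⟨k, rfl⟩ : ∃ k, m = k + 1 := ⟨m - 1, by ring⟩
    exact (w.isShortExact (k + 1)).extVanishes_covariant₁ (ih k) (.of_injective (w.inj _) _)

lemma hasProperInjectiveResolution (w : GorensteinInjectiveWitness R M) :
    HasProperInjectiveResolution R M := by
  refine ⟨fun N => ∃ n, Nonempty (N ≃ₗ[R] LinearMap.ker (w.d n)), ?_, ?_, -1, w.ker_iso⟩
  · rintro N ⟨n, ⟨e⟩⟩
    have h := w.isShortExact n
    refine ⟨ModuleCat.of R (LinearMap.ker (w.d (n + 1))), ModuleCat.of R (w.I (n + 1 + 1)), _,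
      e.symm.toLinearMap ∘ₗ _, ⟨h.injective, ?_, e.symm.surjective.comp h.surjective⟩, w.inj _,
      n + 1, ⟨.refl _ _⟩⟩
    exact LinearEquiv.postcomp_exact_iff_exact.2 h.exact
  · rintro N ⟨n, ⟨e⟩⟩
    exact (w.isInjAcyclic_ker n).of_linearEquiv e

end GorensteinInjectiveWitness

end Witness

lemma isGorensteinInjective_of_chain (Z E : ℤ → ModuleCat.{u} R) (a : ∀ n, Z (n + 1) →ₗ[R] E n)
    (b : ∀ n, E n →ₗ[R] Z n) (h : ∀ n, IsShortExact (a n) (b n))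
    (hE : ∀ n, Module.Injective R (E n)) (hZ : ∀ n, IsInjAcyclic R (Z n)) :
    IsGorensteinInjective R (Z 1) := by
  have ker_d (n : ℤ) : LinearMap.ker (a n ∘ₗ b (n + 1)) = LinearMap.range (a (n + 1)) := by
    rw [LinearMap.ker_comp_of_ker_eq_bot _ (LinearMap.ker_eq_bot.2 (h n).injective),
      (h (n + 1)).exact.linearMap_ker_eq]
  refine ⟨{
    I := fun n => E n
    inj := hE
    d := fun n => a n ∘ₗ b (n + 1)
    d_comp_d := fun n => ?_
    exact := fun n => ?_
    hom_exact := fun V _ _ hV n f hf => ?_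
    ker_iso := ⟨(LinearEquiv.ofInjective _ (h (-1 + 1)).injective).trans
      (LinearEquiv.ofEq _ _ (ker_d (-1)).symm)⟩ }⟩
  · rw [LinearMap.comp_assoc, ← LinearMap.comp_assoc _ _ (b (n + 1)),
      (h (n + 1)).exact.linearMap_comp_eq_zero, LinearMap.zero_comp, LinearMap.comp_zero]
  · rw [ker_d, LinearMap.range_comp_of_range_eq_top _
      (LinearMap.range_eq_top.2 (h (n + 1 + 1)).surjective)]
  · have hbf : b (n + 1) ∘ₗ f = 0 :=
      LinearMap.ext fun v => (h n).injective ((LinearMap.congr_fun hf v).trans (map_zero _).symm)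
    obtain ⟨f', hf'⟩ := (h (n + 1)).exists_comp_eq_of_comp_eq_zero f hbf
    obtain ⟨g, hg⟩ := (h (n + 1 + 1)).exists_lift (hZ _ V hV 0) f'
    exact ⟨g, by rw [LinearMap.comp_assoc, hg, hf']⟩

theorem isGorensteinInjective_iff_hasProperInjectiveResolution :
    IsGorensteinInjective R M ↔ HasProperInjectiveResolution R M := by
  refine ⟨fun ⟨w⟩ => w.hasProperInjectiveResolution, fun hM => ?_⟩
  let X := {N : ModuleCat.{u} R // HasProperInjectiveResolution R N}
  let r (K N : X) : Prop := ∃ (E : ModuleCat.{u} R) (a : K.1 →ₗ[R] E) (b : E →ₗ[R] N.1),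
    IsShortExact a b ∧ Module.Injective R E
  have hpred (N : X) : ∃ K, r K N := by
    obtain ⟨K, E, a, b, h, hE, hK⟩ := hasInjectiveSyzygies_hasProperInjectiveResolution R N.1 N.2
    exact ⟨⟨K, hK⟩, E, a, b, h, hE⟩
  have hsucc (N : X) : ∃ C, r N C := by
    obtain ⟨C, E, a, b, h, hE, hC⟩ := N.2.exists_cosyzygy
    exact ⟨⟨C, hC⟩, E, a, b, h, hE⟩
  obtain ⟨z, hz, hr⟩ := exists_int_chain hpred hsucc ⟨ModuleCat.of R M, hM⟩ 1
  choose E a b h hE using hr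
  have := isGorensteinInjective_of_chain (fun n => (z n).1) E a b h hE fun n => (z n).2.isInjAcyclic
  rwa [hz] at this

namespace IsGorensteinInjective

lemma isInjAcyclic (hM : IsGorensteinInjective R M) : IsInjAcyclic R M :=
  (isGorensteinInjective_iff_hasProperInjectiveResolution.1 hM).isInjAcyclic

lemma of_hasInjectiveSyzygies {𝒢 : ModuleCat.{u} R → Prop} (h𝒢 : HasInjectiveSyzygies 𝒢)
    (hacyc : ∀ N, 𝒢 N → IsInjAcyclic R N) (hM : 𝒢 (ModuleCat.of R M)) :
    IsGorensteinInjective R M :=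
  isGorensteinInjective_iff_hasProperInjectiveResolution.2 ⟨𝒢, h𝒢, hacyc, hM⟩

lemma hasInjectiveSyzygies (R : Type u) [CommRing R] :
    HasInjectiveSyzygies fun N : ModuleCat.{u} R => IsGorensteinInjective R N := by
  simpa only [isGorensteinInjective_iff_hasProperInjectiveResolution] using
    hasInjectiveSyzygies_hasProperInjectiveResolution R

lemma cosyzygy (hA : IsGorensteinInjective R A) (h : IsShortExact a b)
    (hB : Module.Injective R B) : IsGorensteinInjective R C := by
  rw [isGorensteinInjective_iff_hasProperInjectiveResolution] at hA ⊢
  exact hA.cosyzygy h hB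

/-- With `K → U → C` an injective syzygy of `C`, the pullback of `B` and `U` over `C` is `K × B`. A
cover `E → K` by an injective makes `E × B → U` a split surjection, and its kernel covers `A`. -/
lemma syzygy (hC : IsGorensteinInjective R C) (h : IsShortExact a b)
    (hB : Module.Injective R B) (hA : IsInjAcyclic R A) : IsGorensteinInjective R A := by
  obtain ⟨K, U, i, q, hiq, hU, hK⟩ := hasInjectiveSyzygies R (ModuleCat.of R C) hC
  obtain ⟨K₁, E, i₁, q₁, hiq₁, hE, hK₁⟩ := hasInjectiveSyzygies R K hK
  obtain ⟨φ, hφ⟩ := hiq.exists_lift (hK.isInjAcyclic B hB 0) b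
  obtain ⟨ψ, hψ⟩ := hiq.exists_comp_eq_of_comp_eq_zero (φ ∘ₗ a) (by
    rw [← LinearMap.comp_assoc, hφ, h.exact.linearMap_comp_eq_zero])
  have hP := h.coprod_lift hiq hφ hψ
  have hQ := hiq₁.prod_fst_id (V := B)
  obtain ⟨k, p, hkp⟩ := hP.exists_ker_comp hQ
  refine hK₁.cosyzygy hkp ?_
  obtain ⟨s, hs⟩ := hP.exists_lift (hA U hU 0) LinearMap.id
  obtain ⟨t, ht⟩ := hQ.exists_lift (hK₁.isInjAcyclic U hU 0) s
  have hL := IsShortExact.of_surjective (b := i.coprod φ ∘ₗ q₁.prodMap LinearMap.id)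
    (hP.surjective.comp hQ.surjective)
  obtain ⟨r, hr⟩ := hL.exists_section_iff_exists_retraction.1
    ⟨t, by rw [LinearMap.comp_assoc, ht, hs]⟩
  exact injective_of_retract (injective_prod hE hB) _ r hr

end IsGorensteinInjective

end GorensteinInjective

/-! ### Flat modules and classes with injective syzygies -/

/-- `A` is left `Ext¹`-orthogonal to the class `𝒢`. -/
def IsLeftOrthogonal {R : Type u} [CommRing R] (𝒢 : ModuleCat.{u} R → Prop) (A : Type u)
    [AddCommGroup A] [Module R A] : Prop :=
  ∀ K, 𝒢 K → ExtVanishes R A K 1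

namespace IsLeftOrthogonal

variable {R : Type u} [CommRing R] {𝒢 : ModuleCat.{u} R → Prop} {A B C : Type u}
  [AddCommGroup A] [AddCommGroup B] [AddCommGroup C] [Module R A] [Module R B] [Module R C]

lemma of_projective (hA : Module.Projective R A) : IsLeftOrthogonal 𝒢 A :=
  fun _ _ => .of_projective hA 0

lemma cokernel (hA : IsLeftOrthogonal 𝒢 A) (hB : IsLeftOrthogonal 𝒢 B)
    (h𝒢 : HasInjectiveSyzygies 𝒢) {i : A →ₗ[R] B} {p : B →ₗ[R] C} (h : IsShortExact i p) :
    IsLeftOrthogonal 𝒢 C := by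
  intro K hK
  refine h.extVanishes_one_of_forall_exists_extension (hB K hK) fun f => ?_
  obtain ⟨K₁, E, a, b, hab, hE, hK₁⟩ := h𝒢 K hK
  obtain ⟨g, rfl⟩ := hab.exists_lift (hA K₁ hK₁) f
  obtain ⟨g', hg'⟩ := hE.out i h.injective g
  exact ⟨b ∘ₗ g', LinearMap.ext fun x => congrArg b (hg' x)⟩

lemma exists_lift_extending (hA : IsLeftOrthogonal 𝒢 A) (hB : IsLeftOrthogonal 𝒢 B)
    (h𝒢 : HasInjectiveSyzygies 𝒢) {i : A →ₗ[R] B} (hi : Function.Injective i)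
    {K : ModuleCat.{u} R} (hK : 𝒢 K) {E N : Type u} [AddCommGroup E] [AddCommGroup N]
    [Module R E] [Module R N] {a : K →ₗ[R] E} {b : E →ₗ[R] N} (h : IsShortExact a b)
    (f : B →ₗ[R] N) (g : A →ₗ[R] E) (hg : b ∘ₗ g = f ∘ₗ i) :
    ∃ f' : B →ₗ[R] E, b ∘ₗ f' = f ∧ f' ∘ₗ i = g := by
  obtain ⟨f₀, rfl⟩ := h.exists_lift (hB K hK) f
  obtain ⟨d, hd⟩ := h.exists_comp_eq_of_comp_eq_zero (f₀ ∘ₗ i - g) (by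
    rw [LinearMap.comp_sub, hg, LinearMap.comp_assoc, sub_self])
  have hi := IsShortExact.of_injective hi
  obtain ⟨d', rfl⟩ := hi.exists_extension (hA.cokernel hB h𝒢 hi K hK) d
  refine ⟨f₀ - a ∘ₗ d', ?_, ?_⟩
  · rw [LinearMap.comp_sub, ← LinearMap.comp_assoc, h.exact.linearMap_comp_eq_zero,
      LinearMap.zero_comp, sub_zero]
  · rw [LinearMap.sub_comp, LinearMap.comp_assoc, hd, sub_sub_cancel]

end IsLeftOrthogonal

section Chain

variable {R : Type u} [CommRing R] {P : Type u} [AddCommGroup P] [Module R P]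

/-- Eklof's lemma for a filtration of `Y` that need not be indexed by ordinals. -/
lemma isLeftOrthogonal_of_chain {𝒢 : ModuleCat.{u} R → Prop} (h𝒢 : HasInjectiveSyzygies 𝒢)
    {Y : Submodule R P} {𝒟 : Set (Submodule R P)} (hY : ∀ D ∈ 𝒟, D ≤ Y)
    (hchain : ∀ c ⊆ 𝒟, IsChain (· ≤ ·) c → c.Nonempty → sSup c ∈ 𝒟)
    (hbase : ∃ D ∈ 𝒟, IsLeftOrthogonal 𝒢 D)
    (hsucc : ∀ D ∈ 𝒟, D ≠ Y → IsLeftOrthogonal 𝒢 D ∧ ∃ D' ∈ 𝒟, D < D' ∧ IsLeftOrthogonal 𝒢 D') :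
    IsLeftOrthogonal 𝒢 Y := by
  intro K hK
  obtain ⟨E, a, hE, ha⟩ := exists_injective_embedding R K
  have h := IsShortExact.of_injective ha
  refine (h.extVanishes_one_iff_forall_exists_lift (.of_injective hE 0)).2 fun f => ?_
  let 𝒮 : Set (P →ₗ.[R] E) := {g | g.domain ∈ 𝒟 ∧
    ∀ (x : g.domain) (hx : x.1 ∈ Y), (LinearMap.range a).mkQ (g x) = f ⟨x, hx⟩}
  obtain ⟨D, hD, hDorth⟩ := hbase
  obtain ⟨g₀, hg₀⟩ := h.exists_lift (hDorth K hK) (f ∘ₗ Submodule.inclusion (hY D hD))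
  obtain ⟨g, -, ⟨hg𝒟, hgf⟩, hmax⟩ := zorn_le_nonempty₀ 𝒮 (by
    intro c hc hchain' g hgc
    have hdir := hchain'.directedOn
    refine ⟨LinearPMap.sSup c hdir, ⟨hchain _ ?_ ?_ ⟨_, g, hgc, rfl⟩, fun x hx => ?_⟩,
      fun g hg => LinearPMap.le_sSup hdir hg⟩
    · rintro _ ⟨g, hg, rfl⟩
      exact (hc hg).1
    · exact hchain'.image_of_map_rel _ _ _ fun _ _ hle => hle.1
    · obtain ⟨x, hx'⟩ := x
      obtain ⟨g, hg, hxg⟩ := (LinearPMap.mem_domain_sSup_iff ⟨g, hgc⟩ hdir).1 hx'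
      exact (congrArg _ (LinearPMap.sSup_apply hdir hg ⟨x, hxg⟩)).trans
        ((hc hg).2 ⟨x, hxg⟩ hx)) ⟨D, g₀⟩ ⟨hD, fun x _ => LinearMap.congr_fun hg₀ x⟩
  obtain hgY | hgY := eq_or_ne g.domain Y
  · exact ⟨g.toFun ∘ₗ Submodule.inclusion hgY.ge, LinearMap.ext fun x => hgf ⟨x, _⟩ x.2⟩
  obtain ⟨hgorth, D', hD', hlt, hD'orth⟩ := hsucc _ hg𝒟 hgY
  obtain ⟨g', hg'f, hg'⟩ := hgorth.exists_lift_extending hD'orth h𝒢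
    (Submodule.inclusion_injective hlt.le) hK h (f ∘ₗ Submodule.inclusion (hY D' hD')) g.toFun
    (LinearMap.ext fun x => hgf x (hY _ hg𝒟 x.2))
  refine absurd (hmax (y := ⟨D', g'⟩) ⟨hD', fun x _ => LinearMap.congr_fun hg'f x⟩
    ⟨hlt.le, ?_⟩).1 hlt.not_ge
  rintro ⟨x, hx⟩ ⟨_, _⟩ rfl
  exact (LinearMap.congr_fun hg' ⟨x, hx⟩).symm

end Chain

section FinsetClosure

open Cardinal

/-- The closure operator whose closed sets are the sets `C` such that `w s ⊆ C` for every finite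
`s ⊆ C`. -/
def finsetClosure {α : Type*} (w : Finset α → Finset α) : ClosureOperator (Set α) :=
  .ofCompletePred (fun C => ∀ s : Finset α, ↑s ⊆ C → ↑(w s) ⊆ C) fun _ hC s hs =>
    Set.subset_sInter fun C hC' => hC C hC' s (hs.trans (Set.sInter_subset_of_mem hC'))

lemma finsetClosure_sUnion_subset {α : Type*} (w : Finset α → Finset α) {c : Set (Set α)}
    (hne : c.Nonempty) (hdir : DirectedOn (· ⊆ ·) c) :
    finsetClosure w (⋃₀ c) ⊆ ⋃ I ∈ c, finsetClosure w I := by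
  refine (finsetClosure w).closure_min ?_ fun s hs => ?_
  · rw [Set.sUnion_eq_biUnion]
    exact Set.iUnion₂_mono fun I _ => (finsetClosure w).le_closure I
  · have hdir' : DirectedOn (fun I J => finsetClosure w I ⊆ finsetClosure w J) c :=
      hdir.mono fun _ _ h => (finsetClosure w).monotone h
    obtain ⟨I, hI, hsI⟩ := hdir'.exists_mem_subset_of_finset_subset_biUnion hne hs
    exact ((finsetClosure w).isClosed_closure I s hsI).trans
      (Set.subset_biUnion_of_mem (u := fun I => finsetClosure w I) hI)

lemma finsetClosure_image_sSup_subset {α β : Type*} [LinearOrder β] (w : Finset α → Finset α)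
    (f : β → α) {s : Set (LowerSet β)} (hs : s.Nonempty) :
    finsetClosure w (f '' (sSup s : LowerSet β)) ⊆ ⋃ I ∈ s, finsetClosure w (f '' I) := by
  let c : Set (Set α) := (fun I : LowerSet β => f '' I) '' s
  have hc : DirectedOn (· ⊆ ·) c := directedOn_image.2 fun I hI J hJ =>
    (le_total I J).elim (fun h => ⟨J, hJ, Set.image_mono h, subset_rfl⟩)
      fun h => ⟨I, hI, subset_rfl, Set.image_mono h⟩
  have hsSup : f '' (sSup s : LowerSet β) = ⋃₀ c := by
    rw [LowerSet.coe_sSup, Set.image_iUnion₂, Set.sUnion_image]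
  rw [hsSup]
  exact (finsetClosure_sUnion_subset w (hs.image _) hc).trans (Set.biUnion_image ..).subset

lemma mk_iUnion_finset_le {α β : Type u} (f : Finset β → Finset α) :
    #(⋃ s, (f s : Set α) : Set α) ≤ max #β ℵ₀ := by
  classical
  have hβ : #(Finset β) ≤ max #β ℵ₀ :=
    (mk_le_of_surjective List.toFinset_surjective).trans
      ((mk_list_le_max β).trans_eq (max_comm _ _))
  refine (mk_iUnion_le _).trans (mul_le_of_le (le_max_right _ _) hβ ?_)
  exact ciSup_le' fun s => (lt_aleph0_of_finite _).le.trans (le_max_right _ _)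

lemma mk_finsetClosure_le {α : Type u} (w : Finset α → Finset α) (I : Set α) :
    #(finsetClosure w I) ≤ max #I ℵ₀ := by
  let G (J : Set α) : Set α := J ∪ ⋃ s : Finset J, w (s.map (.subtype _))
  have hG (J : Set α) (hJ : #J ≤ max #I ℵ₀) : #(G J) ≤ max #I ℵ₀ :=
    (mk_union_le _ _).trans (add_le_of_le (le_max_right _ _) hJ
      ((mk_iUnion_finset_le _).trans (max_le hJ (le_max_right _ _))))
  have hsucc (n : ℕ) : G^[n + 1] I = G (G^[n] I) := Function.iterate_succ_apply' _ _ _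
  have hmono : Monotone fun n => G^[n] I :=
    monotone_nat_of_le_succ fun n => (hsucc n).symm ▸ Set.subset_union_left
  have hsub : finsetClosure w I ⊆ ⋃ n, G^[n] I := by
    refine (finsetClosure w).closure_min (Set.subset_iUnion (fun n => G^[n] I) 0) fun s hs => ?_
    obtain ⟨n, hn⟩ := hmono.directed_le.exists_mem_subset_of_finset_subset_biUnion hs
    refine Set.Subset.trans ?_ (Set.subset_iUnion _ (n + 1))
    rw [hsucc]
    refine Set.Subset.trans ?_ Set.subset_union_right
    classical
    refine Set.subset_iUnion_of_subset (s.subtype (· ∈ G^[n] I)) ?_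
    rw [Finset.subtype_map_of_mem fun x hx => hn hx]
  have hcard (n : ℕ) : #(G^[n] I : Set α) ≤ max #I ℵ₀ := by
    induction n with
    | zero => exact le_max_left _ _
    | succ n ih => exact (hsucc n).symm ▸ hG _ ih
  refine (mk_le_mk_of_subset hsub).trans ?_
  refine (lift_uzero _).symm.trans_le ((mk_iUnion_le_lift.{u, 0} _).trans ?_)
  rw [mk_nat, lift_aleph0]
  exact mul_le_of_le (le_max_right _ _) (le_max_right _ _)
    (ciSup_le' fun n => (lift_uzero _).trans_le (hcard n))

end FinsetClosure

section LocallySplit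

variable {R : Type u} [CommRing R] {P Y F : Type u} [AddCommGroup P] [AddCommGroup Y]
  [AddCommGroup F] [Module R P] [Module R Y] [Module R F]

lemma exists_seq_eventually_zero {j : Y →ₗ[R] P} (hj : ∀ y, ∃ θ : P →ₗ[R] Y, θ (j y) = y)
    {v : ℕ → Y} (hv : Submodule.span R (Set.range v) = ⊤) :
    ∃ (t : ℕ → Y →ₗ[R] Y) (θ : ℕ → P →ₗ[R] Y), t 0 = LinearMap.id ∧
      (∀ n, t (n + 1) = t n - θ n ∘ₗ j ∘ₗ t n) ∧ ∀ y, ∃ m, ∀ n ≥ m, t n y = 0 := by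
  choose Θ hΘ using hj
  let t (n : ℕ) : Y →ₗ[R] Y := n.rec LinearMap.id fun n tn => tn - Θ (tn (v n)) ∘ₗ j ∘ₗ tn
  have ht (n : ℕ) (y : Y) : t (n + 1) y = t n y - Θ (t n (v n)) (j (t n y)) := rfl
  have htv (k n : ℕ) (hn : k + 1 ≤ n) : t n (v k) = 0 := by
    induction n, hn using Nat.le_induction with
    | base => rw [ht, hΘ, sub_self]
    | succ n _ ih => rw [ht, ih, map_zero, map_zero, sub_self]
  refine ⟨t, fun n => Θ (t n (v n)), rfl, fun _ => rfl, fun y => ?_⟩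
  have hy : y ∈ Submodule.span R (Set.range v) := hv ▸ Submodule.mem_top
  induction hy using Submodule.span_induction with
  | mem y hy =>
    obtain ⟨k, rfl⟩ := hy
    exact ⟨k + 1, htv k⟩
  | zero => exact ⟨0, fun n _ => map_zero _⟩
  | add x y _ _ hx hy =>
    obtain ⟨⟨k, hk⟩, ⟨l, hl⟩⟩ := hx, hy
    exact ⟨max k l, fun n hn => by
      rw [map_add, hk n (le_of_max_le_left hn), hl n (le_of_max_le_right hn), add_zero]⟩
  | smul r y _ hy =>
    obtain ⟨k, hk⟩ := hy
    exact ⟨k, fun n hn => by rw [map_smul, hk n hn, smul_zero]⟩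

lemma projective_of_countable_span (hP : Module.Projective R P) {j : Y →ₗ[R] P}
    (hj : ∀ y, ∃ θ : P →ₗ[R] Y, θ (j y) = y) {v : ℕ → Y}
    (hv : Submodule.span R (Set.range v) = ⊤) : Module.Projective R Y := by
  obtain ⟨t, θ, ht0, ht, ht_zero⟩ := exists_seq_eventually_zero hj hv
  have hsupp (y : Y) : (Function.support fun n => j (t n y)).Finite := by
    obtain ⟨m, hm⟩ := ht_zero y
    refine (Set.finite_Iio m).subset fun n hn => Set.mem_Iio.2 <| not_le.1 fun hmn => hn ?_
    exact (congrArg j (hm n hmn)).trans (map_zero j)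
  let σ : Y →ₗ[R] ℕ →₀ P :=
    { toFun := fun y => Finsupp.ofSupportFinite (fun n => j (t n y)) (hsupp y)
      map_add' := fun x y => Finsupp.ext fun n =>
        (congrArg j (map_add (t n) x y)).trans (map_add j _ _)
      map_smul' := fun r y => Finsupp.ext fun n =>
        (congrArg j (map_smul (t n) r y)).trans (map_smul j _ _) }
  classical
  have : Module.Projective R (ℕ →₀ P) := .of_equiv (finsuppLequivDFinsupp R).symm
  refine .of_split σ (Finsupp.lsum R θ) (LinearMap.ext fun y => ?_)
  obtain ⟨m, hm⟩ := ht_zero y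
  have hσ : (σ y).support ⊆ Finset.range m := fun n hn => by
    by_contra hn'
    exact Finsupp.mem_support_iff.1 hn
      ((congrArg j (hm n (by simpa using hn'))).trans (map_zero j))
  calc Finsupp.lsum R θ (σ y) = ∑ n ∈ Finset.range m, θ n (j (t n y)) :=
        Finsupp.sum_of_support_subset _ hσ _ fun n _ => map_zero (θ n)
    _ = ∑ n ∈ Finset.range m, (t n y - t (n + 1) y) :=
        Finset.sum_congr rfl fun n _ => by rw [ht]; exact (sub_sub_cancel _ _).symm
    _ = y := by rw [Finset.sum_range_sub', ht0, hm m le_rfl, sub_zero, LinearMap.id_apply]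

/-- Every finite subset of `X` is fixed pointwise by an endomorphism of `P` with image in the span
of a finite subset of `X`; equivalently, `span X` is a pure submodule when `P` is free. -/
def IsLocallySplit (R : Type u) [CommRing R] {P : Type u} [AddCommGroup P] [Module R P]
    (X : Set P) : Prop :=
  ∀ s : Finset P, ↑s ⊆ X → ∃ (T : Finset P) (θ : P →ₗ[R] P), ↑T ⊆ X ∧
    LinearMap.range θ ≤ Submodule.span R T ∧ ∀ x ∈ s, θ x = x

lemma isLocallySplit_ker (hF : Module.Flat R F) {ι : Type u} {b : (ι →₀ R) →ₗ[R] F}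
    (hb : Function.Surjective b) : IsLocallySplit R (LinearMap.ker b : Set (ι →₀ R)) := by
  classical
  intro s hs
  let D : Finset ι := s.biUnion Finsupp.support
  let incl : (D →₀ R) →ₗ[R] (ι →₀ R) := Finsupp.lmapDomain R R Subtype.val
  let pr : (ι →₀ R) →ₗ[R] (D →₀ R) := Finsupp.lcomapDomain Subtype.val Subtype.val_injective
  have incl_pr (x) (hx : x ∈ s) : incl (pr x) = x :=
    Finsupp.mapDomain_comapDomain _ Subtype.val_injective _ fun i hi =>
      ⟨⟨i, Finset.mem_biUnion.2 ⟨x, hx, hi⟩⟩, rfl⟩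
  let f : (s →₀ R) →ₗ[R] (D →₀ R) := Finsupp.linearCombination R fun x : s => pr x
  have hf (x : s) : f (Finsupp.single x 1) = pr x := by
    rw [Finsupp.linearCombination_single, one_smul]
  have hbf : (b ∘ₗ incl) ∘ₗ f = 0 := Finsupp.lhom_ext' fun x => LinearMap.ext_ring <| by
    change b (incl (f (Finsupp.single x 1))) = 0
    rw [hf, incl_pr x x.2]
    exact hs x.2
  obtain ⟨k, c, y, hcy, hcf⟩ := Module.Flat.exists_factorization_of_comp_eq_zero_of_free hbf
  obtain ⟨y', rfl⟩ := Module.projective_lifting_property b y hb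
  let θ : (D →₀ R) →ₗ[R] (ι →₀ R) := incl - y' ∘ₗ c
  have hbθ : b ∘ₗ θ = 0 := by rw [LinearMap.comp_sub, hcy, LinearMap.comp_assoc, sub_self]
  refine ⟨Finset.univ.image fun d : D => θ (Finsupp.single d 1), θ ∘ₗ pr, ?_, ?_, fun x hx => ?_⟩
  · rw [Finset.coe_image]
    rintro _ ⟨d, -, rfl⟩
    exact LinearMap.congr_fun hbθ _
  · refine (LinearMap.range_comp_le_range _ _).trans ?_
    rw [LinearMap.range_eq_map, ← Finsupp.basisSingleOne.span_eq, Submodule.map_span,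
      Submodule.span_le]
    rintro _ ⟨_, ⟨d, rfl⟩, rfl⟩
    exact Submodule.subset_span (by simp)
  · have hc : c (pr x) = 0 := by
      rw [← hf ⟨x, hx⟩]
      exact LinearMap.congr_fun hcf _
    change incl (pr x) - y' (c (pr x)) = x
    rw [hc, map_zero, sub_zero, incl_pr x hx]

namespace IsLocallySplit

variable {X : Set P}

lemma exists_apply_eq (hX : IsLocallySplit R X) (y : Submodule.span R X) :
    ∃ θ : P →ₗ[R] Submodule.span R X, θ y = y := by
  obtain ⟨s, hs, hy⟩ := Submodule.mem_span_finite_of_mem_span y.2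
  obtain ⟨T, θ, hT, hθ, hθs⟩ := hX s hs
  exact ⟨θ.codRestrict _ fun x => Submodule.span_mono hT (hθ ⟨x, rfl⟩),
    Subtype.ext (LinearMap.eqOn_span (g := LinearMap.id) hθs hy)⟩

lemma projective_of_countable (hX : IsLocallySplit R X) (hP : Module.Projective R P)
    (hcount : X.Countable) : Module.Projective R (Submodule.span R X) := by
  let X' : Set (Submodule.span R X) := Subtype.val ⁻¹' X
  have hX' : X'.Countable := hcount.preimage Subtype.val_injective
  obtain ⟨v, hv⟩ := (hX'.insert 0).exists_eq_range (Set.insert_nonempty _ _)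
  refine projective_of_countable_span hP (j := (Submodule.span R X).subtype)
    hX.exists_apply_eq (v := v) ?_
  rw [← hv, Submodule.span_insert_zero, Submodule.span_span_coe_preimage]

lemma exists_finsetClosure (hX : IsLocallySplit R X) :
    ∃ w : Finset P → Finset P, (finsetClosure w).IsClosed X ∧
      ∀ Z ⊆ X, (finsetClosure w).IsClosed Z → IsLocallySplit R Z := by
  have h (s : Finset P) : ∃ (T : Finset P) (θ : P →ₗ[R] P), ↑s ⊆ X → ↑T ⊆ X ∧
      LinearMap.range θ ≤ Submodule.span R T ∧ ∀ x ∈ s, θ x = x := by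
    by_cases hs : ↑s ⊆ X
    · obtain ⟨T, θ, h⟩ := hX s hs
      exact ⟨T, θ, fun _ => h⟩
    · exact ⟨∅, 0, fun h => absurd h hs⟩
  choose w θ h using h
  exact ⟨w, fun s hs => (h s hs).1, fun Z hZX hZ s hs =>
    ⟨w s, θ s, hZ s hs, (h s (hs.trans hZX)).2⟩⟩

end IsLocallySplit

end LocallySplit

section Cotorsion

variable {R : Type u} [CommRing R] {𝒢 : ModuleCat.{u} R → Prop}

open Cardinal

/-- The submodules spanned by the closures of the initial segments of a well-ordering of `X` of
minimal order type form a chain; all its members but the last have fewer than `#X` generators. -/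
lemma IsLocallySplit.isLeftOrthogonal_of_forall_mk_lt {P : Type u} [AddCommGroup P] [Module R P]
    {X : Set P} (hX : IsLocallySplit R X) (h𝒢 : HasInjectiveSyzygies 𝒢) (hcard : ℵ₀ < #X)
    (ih : ∀ Z : Set P, #Z < #X → IsLocallySplit R Z →
      IsLeftOrthogonal 𝒢 (Submodule.span R Z)) :
    IsLeftOrthogonal 𝒢 (Submodule.span R X) := by
  obtain ⟨w, hXw, hw⟩ := hX.exists_finsetClosure
  obtain ⟨_, _, hord⟩ := exists_ord_eq_type_lt X
  let D (I : LowerSet X) : Submodule R P :=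
    Submodule.span R (finsetClosure w (Subtype.val '' (I : Set X)))
  have hsub (I : LowerSet X) : finsetClosure w (Subtype.val '' (I : Set X)) ⊆ X :=
    (finsetClosure w).closure_min (Subtype.coe_image_subset _ _) hXw
  have hD : Monotone D := fun _ _ hle =>
    Submodule.span_mono ((finsetClosure w).monotone (Set.image_mono hle))
  have horth {I : LowerSet X} (hI : #(I : Set X) < #X) : IsLeftOrthogonal 𝒢 (D I) :=
    ih _ ((mk_finsetClosure_le w _).trans_lt (max_lt (mk_image_le.trans_lt hI) hcard))
      (hw _ (hsub I) ((finsetClosure w).isClosed_closure _))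
  refine isLeftOrthogonal_of_chain h𝒢 (𝒟 := Set.range D) ?_ ?_ ?_ ?_
  · rintro _ ⟨I, rfl⟩
    exact Submodule.span_mono (hsub I)
  · rintro c hc - ⟨D₀, hD₀⟩
    obtain ⟨I₀, rfl⟩ := hc hD₀
    refine ⟨sSup {I | D I ∈ c}, le_antisymm (Submodule.span_le.2 ?_) (sSup_le fun E hE => ?_)⟩
    · exact (finsetClosure_image_sSup_subset w Subtype.val ⟨I₀, hD₀⟩).trans <|
        Set.iUnion₂_subset fun I hI => Submodule.subset_span.trans (le_sSup (a := D I) hI)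
    · obtain ⟨I, rfl⟩ := hc hE
      exact hD (le_sSup hE)
  · exact ⟨_, ⟨⊥, rfl⟩, horth (by simpa using aleph0_pos.trans hcard)⟩
  · rintro _ ⟨I, rfl⟩ hne
    obtain ⟨i, hi⟩ : ∃ i : X, i.1 ∉ D I := by
      contrapose! hne
      exact (Submodule.span_mono (hsub I)).antisymm
        (Submodule.span_le.2 fun x hx => hne ⟨x, hx⟩)
    have hle (J : LowerSet X) (hJ : i ∈ J) : i.1 ∈ D J :=
      Submodule.subset_span ((finsetClosure w).le_closure _ ⟨i, hJ, rfl⟩)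
    have hI : I ≤ LowerSet.Iio i := fun j hj =>
      not_le.1 fun hij => hi (hle I (I.lower hij hj))
    refine ⟨horth ((mk_le_mk_of_subset hI).trans_lt (mk_Iio_lt i hord)), _,
      ⟨LowerSet.Iic i, rfl⟩, ?_, horth (mk_Iic_lt i hord hcard.le)⟩
    refine (hD (hI.trans fun j hj => hj.le)).lt_of_ne fun heq => hi ?_
    exact heq ▸ hle _ (Set.mem_Iic.2 le_rfl)

lemma IsLocallySplit.isLeftOrthogonal {P : Type u} [AddCommGroup P] [Module R P] {X : Set P}
    (hX : IsLocallySplit R X) (hP : Module.Projective R P) (h𝒢 : HasInjectiveSyzygies 𝒢) :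
    IsLeftOrthogonal 𝒢 (Submodule.span R X) := by
  induction hκ : #X using WellFoundedLT.induction generalizing X with
  | ind κ ih =>
    subst hκ
    obtain hcard | hcard := le_or_gt #X ℵ₀
    · exact .of_projective (hX.projective_of_countable hP (le_aleph0_iff_set_countable.1 hcard))
    · exact hX.isLeftOrthogonal_of_forall_mk_lt h𝒢 hcard fun Z hZ hZX => ih _ hZ hZX rfl

lemma IsLeftOrthogonal.of_flat (h𝒢 : HasInjectiveSyzygies 𝒢) {F : Type u} [AddCommGroup F]
    [Module R F] (hF : Module.Flat R F) : IsLeftOrthogonal 𝒢 F := by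
  have hb := Finsupp.linearCombination_id_surjective R F
  have hker := (isLocallySplit_ker hF hb).isLeftOrthogonal inferInstance h𝒢
  rw [Submodule.span_eq] at hker
  exact hker.cokernel (.of_projective inferInstance) h𝒢 (.of_surjective hb)

lemma HasInjectiveSyzygies.isCotorsion (h𝒢 : HasInjectiveSyzygies 𝒢) {M : Type u}
    [AddCommGroup M] [Module R M] (hM : 𝒢 (.of R M)) : IsCotorsion R M :=
  fun _ _ _ hF => IsLeftOrthogonal.of_flat h𝒢 hF _ hM

lemma IsGorensteinInjective.isCotorsion {M : Type u} [AddCommGroup M] [Module R M]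
    (hM : IsGorensteinInjective R M) : IsCotorsion R M :=
  (IsGorensteinInjective.hasInjectiveSyzygies R).isCotorsion hM

end Cotorsion

/-! ### Change of rings -/

section ChangeOfRings

open TensorProduct

variable {R S : Type u} [CommRing R] [CommRing S] [Algebra R S] {A B C E F M V : Type u}
  [AddCommGroup A] [AddCommGroup B] [AddCommGroup C] [AddCommGroup E] [AddCommGroup F]
  [AddCommGroup M] [AddCommGroup V] [Module R A] [Module R B] [Module R C] [Module R E]
  [Module R F] [Module R M]

instance homIsScalarTower : IsScalarTower R S (S →ₗ[R] M) :=
  ⟨fun r s f => LinearMap.ext fun t => by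
    rw [homSMul_apply, LinearMap.smul_apply, homSMul_apply, smul_mul_assoc, map_smul]⟩

/-- The `S`-linear map `Hom_R(S, A) → Hom_R(S, B)` induced by an `R`-linear map `A → B`. -/
noncomputable def homMap (S : Type u) [CommRing S] [Algebra R S] (b : A →ₗ[R] B) :
    (S →ₗ[R] A) →ₗ[S] (S →ₗ[R] B) where
  toFun f := b ∘ₗ f
  map_add' f g := LinearMap.comp_add f g b
  map_smul' _ _ := rfl

/-- The adjunction `Hom_S(V, Hom_R(S, M)) ≃ Hom_R(V, M)` given by evaluation at `1`. -/
noncomputable def homEquiv [Module R V] [Module S V] [IsScalarTower R S V] :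
    (V →ₗ[S] (S →ₗ[R] M)) ≃ (V →ₗ[R] M) where
  toFun g := LinearMap.applyₗ (1 : S) ∘ₗ g.restrictScalars R
  invFun f :=
    { toFun := fun v => f ∘ₗ (LinearMap.toSpanSingleton S V v).restrictScalars R
      map_add' := fun v w => LinearMap.ext fun s => by simp
      map_smul' := fun s v => LinearMap.ext fun t => by
        simp [homSMul_apply, mul_smul, smul_comm s t v] }
  left_inv g := LinearMap.ext fun v => LinearMap.ext fun s => by simp [homSMul_apply]
  right_inv f := LinearMap.ext fun v => by simp

lemma IsShortExact.hom [Module.Flat R S] {a : A →ₗ[R] B} {b : B →ₗ[R] C}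
    (h : IsShortExact a b) (hA : IsCotorsion R A) :
    IsShortExact (homMap S a) (homMap S b) where
  injective _ _ hfg := LinearMap.ext fun s => h.injective (LinearMap.congr_fun hfg s)
  exact f := by
    refine ⟨h.exists_comp_eq_of_comp_eq_zero f, ?_⟩
    rintro ⟨g, rfl⟩
    exact LinearMap.ext fun s => h.exact.apply_apply_eq_zero (g s)
  surjective := h.exists_lift (hA S inferInstance)

lemma injective_hom (hE : Module.Injective R E) : Module.Injective S (S →ₗ[R] E) where
  out X Y _ _ _ _ f hf g := by
    let _ : Module R X := Module.compHom X (algebraMap R S)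
    let _ : Module R Y := Module.compHom Y (algebraMap R S)
    have : IsScalarTower R S X := .of_algebraMap_smul fun _ _ => rfl
    have : IsScalarTower R S Y := .of_algebraMap_smul fun _ _ => rfl
    obtain ⟨k, hk⟩ := hE.out (f.restrictScalars R) hf (homEquiv g)
    have hkf : homEquiv.symm k ∘ₗ f = g :=
      homEquiv.injective (LinearMap.ext fun x => by
        rw [← hk]; exact LinearMap.congr_fun (homEquiv.apply_symm_apply k) (f x))
    exact ⟨homEquiv.symm k, LinearMap.congr_fun hkf⟩

lemma injective_of_flat_algebra [Module.Flat R S] [Module R V] [Module S V] [IsScalarTower R S V]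
    (hV : Module.Injective S V) : Module.Injective R V where
  out X Y _ _ _ _ f hf g := by
    obtain ⟨k, hk⟩ := hV.out (f.baseChange S)
      (Module.Flat.lTensor_preserves_injective_linearMap f hf) (g.liftBaseChange S)
    exact ⟨k.restrictScalars R ∘ₗ TensorProduct.mk R S Y 1, fun x => by simpa using hk (1 ⊗ₜ x)⟩

section FaithfullyFlat

variable (S) [Module.FaithfullyFlat R S]

lemma isShortExact_mk_one (F : Type u) [AddCommGroup F] [Module R F] :
    IsShortExact (TensorProduct.mk R S F 1) (LinearMap.range (TensorProduct.mk R S F 1)).mkQ :=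
  .of_injective (Module.FaithfullyFlat.tensorProduct_mk_injective (A := R) F)

lemma exists_section_applyₗ_one (hE : Module.Injective R E) :
    ∃ σ : E →ₗ[R] (S →ₗ[R] E), LinearMap.applyₗ (1 : S) ∘ₗ σ = LinearMap.id := by
  obtain ⟨ρ, hρ⟩ := hE.out _ (isShortExact_mk_one S E).injective LinearMap.id
  exact ⟨(TensorProduct.curry ρ).flip, LinearMap.ext hρ⟩

lemma flat_quotient_range_mk_one (hF : Module.Flat R F) :
    Module.Flat R ((S ⊗[R] F) ⧸ LinearMap.range (TensorProduct.mk R S F 1)) := by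
  have hSF : Module.Injective R (CharacterModule (S ⊗[R] F)) :=
    Module.Flat.iff_characterModule_injective.1 inferInstance
  have hF' : Module.Injective R (CharacterModule F) :=
    Module.Flat.iff_characterModule_injective.1 hF
  have h := (isShortExact_mk_one (R := R) S F).characterModule_dual
  obtain ⟨σ, hσ⟩ := exists_section_applyₗ_one S hF'
  obtain ⟨r, hr⟩ := h.exists_section_iff_exists_retraction.1
    ⟨CharacterModule.uncurry ∘ₗ σ, LinearMap.ext fun c => DFunLike.ext _ _ fun x =>
      DFunLike.congr_fun (LinearMap.congr_fun hσ c) x⟩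
  exact Module.Flat.iff_characterModule_injective.2 (injective_of_retract hSF _ r hr)

lemma IsCotorsion.exists_lift_applyₗ_one (hM : IsCotorsion R M) (hF : Module.Flat R F)
    (f : F →ₗ[R] M) : ∃ g : F →ₗ[R] (S →ₗ[R] M), LinearMap.applyₗ (1 : S) ∘ₗ g = f := by
  obtain ⟨k, rfl⟩ := (isShortExact_mk_one (R := R) S F).exists_extension
    (hM _ (flat_quotient_range_mk_one S hF)) f
  exact ⟨(TensorProduct.curry k).flip, rfl⟩

end FaithfullyFlat

lemma IsShortExact.exists_lift_of_flat {K U G : Type u} [AddCommGroup K] [AddCommGroup U]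
    [AddCommGroup G] [Module S K] [Module S U] [Module S G] [Module R U] [Module R G]
    [IsScalarTower R S U] [IsScalarTower R S G] {a : K →ₗ[S] U} {b : U →ₗ[S] G}
    (h : IsShortExact a b) (hK : IsCotorsion S K) (hF : Module.Flat R F) (f : F →ₗ[R] G) :
    ∃ g : F →ₗ[R] U, b.restrictScalars R ∘ₗ g = f := by
  obtain ⟨k, hk⟩ := h.exists_lift (hK (S ⊗[R] F) inferInstance) (f.liftBaseChange S)
  exact ⟨k.restrictScalars R ∘ₗ TensorProduct.mk R S F 1,
    LinearMap.ext fun x => by simpa using LinearMap.congr_fun hk (1 ⊗ₜ x)⟩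

namespace IsCotorsion

lemma extVanishes_one_hom_iff [Module.Flat R S] [Module R V] [Module S V] [IsScalarTower R S V]
    (hM : IsCotorsion R M) : ExtVanishes S V (S →ₗ[R] M) 1 ↔ ExtVanishes R V M 1 := by
  obtain ⟨E, a, hE, ha⟩ := exists_injective_embedding R M
  have h := IsShortExact.of_injective ha
  rw [(h.hom hM).extVanishes_one_iff_forall_exists_lift (.of_injective (injective_hom hE) 0),
    h.extVanishes_one_iff_forall_exists_lift (.of_injective hE 0)]
  exact homEquiv.forall_congr fun f => homEquiv.exists_congr fun g => homEquiv.injective.eq_iff.symm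

lemma extVanishes_hom_iff [Module.Flat R S] [Module R V] [Module S V] [IsScalarTower R S V]
    (hM : IsCotorsion R M) (i : ℕ) :
    ExtVanishes S V (S →ₗ[R] M) (i + 1) ↔ ExtVanishes R V M (i + 1) := by
  induction i generalizing M with
  | zero => exact hM.extVanishes_one_hom_iff
  | succ i ih =>
    obtain ⟨E, a, hE, ha⟩ := exists_injective_embedding R M
    have h := IsShortExact.of_injective ha
    rw [(h.hom hM).extVanishes_succ_iff (injective_hom hE), h.extVanishes_succ_iff hE]
    exact ih (hM.cosyzygy h hE)

lemma isInjAcyclic_hom [Module.Flat R S] (hM : IsCotorsion R M) (h : IsInjAcyclic R M) :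
    IsInjAcyclic S (S →ₗ[R] M) := fun V _ _ hV i => by
  let _ : Module R V := Module.compHom V (algebraMap R S)
  have : IsScalarTower R S V := .of_algebraMap_smul fun _ _ => rfl
  exact (hM.extVanishes_hom_iff i).2 (h V (injective_of_flat_algebra hV) i)

lemma isInjAcyclic_of_hom [Module.FaithfullyFlat R S] (hM : IsCotorsion R M)
    (h : IsInjAcyclic S (S →ₗ[R] M)) : IsInjAcyclic R M := fun V _ _ hV i => by
  obtain ⟨σ, hσ⟩ := exists_section_applyₗ_one S hV
  exact ((hM.extVanishes_hom_iff i).1 (h _ (injective_hom hV) i)).of_retract_left σ _ hσ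

end IsCotorsion

end ChangeOfRings

/-! ### Gorenstein injectivity of `Hom_R(S, M)` -/

section Main

variable {R S : Type u} [CommRing R] [CommRing S] [Algebra R S] {M : Type u} [AddCommGroup M]
  [Module R M]

section Syzygy

variable {K U : Type u} [AddCommGroup K] [AddCommGroup U] [Module R U] [Module S K] [Module S U]
  [IsScalarTower R S U] {a : K →ₗ[S] U} {b : U →ₗ[S] (S →ₗ[R] M)}

lemma IsShortExact.exists_homEquiv_comp_eq_of_flat [Module.FaithfullyFlat R S]
    (h : IsShortExact a b) (hK : IsCotorsion S K) (hM : IsCotorsion R M) {F : Type u}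
    [AddCommGroup F] [Module R F] (hF : Module.Flat R F) (f : F →ₗ[R] M) :
    ∃ g : F →ₗ[R] U, homEquiv b ∘ₗ g = f := by
  obtain ⟨f', rfl⟩ := hM.exists_lift_applyₗ_one S hF f
  obtain ⟨g, rfl⟩ := h.exists_lift_of_flat hK hF f'
  exact ⟨g, rfl⟩

lemma IsShortExact.exists_homEquiv_comp_eq_of_injective [Module.FaithfullyFlat R S]
    (h : IsShortExact a b) (hK : IsInjAcyclic S K) {V : Type u} [AddCommGroup V] [Module R V]
    (hV : Module.Injective R V) (f : V →ₗ[R] M) : ∃ g : V →ₗ[R] U, homEquiv b ∘ₗ g = f := by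
  obtain ⟨σ, hσ⟩ := exists_section_applyₗ_one S hV
  obtain ⟨g, hg⟩ := h.exists_lift (hK _ (injective_hom hV) 0) (homMap S f)
  exact ⟨g.restrictScalars R ∘ₗ σ, LinearMap.ext fun v =>
    (LinearMap.congr_fun (LinearMap.congr_fun hg (σ v)) 1).trans
      (congrArg f (LinearMap.congr_fun hσ v))⟩

end Syzygy

lemma IsGorensteinInjective.hom [Module.Flat R S] (hM : IsGorensteinInjective R M) :
    IsGorensteinInjective S (S →ₗ[R] M) := by
  refine .of_hasInjectiveSyzygies (𝒢 := fun N => ∃ M' : ModuleCat.{u} R,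
    IsGorensteinInjective R M' ∧ N = .of S (S →ₗ[R] M')) ?_ ?_ ⟨.of R M, hM, rfl⟩
  · rintro _ ⟨M', hM', rfl⟩
    obtain ⟨K, E, a, b, h, hE, hK⟩ := hasInjectiveSyzygies R M' hM'
    exact ⟨.of S (S →ₗ[R] K), .of S (S →ₗ[R] E), homMap S a, homMap S b, h.hom hK.isCotorsion,
      injective_hom hE, K, hK, rfl⟩
  · rintro _ ⟨M', hM', rfl⟩
    exact hM'.isCotorsion.isInjAcyclic_hom hM'.isInjAcyclic

/-- An injective syzygy `K → U → Hom_R(S, M)` over `S` yields one over `R`, namely the adjoint map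
`U → M` and its kernel: maps from flat and from injective modules to `M` lift to `U`. -/
lemma exists_syzygy_of_hom [Module.FaithfullyFlat R S] (hM : IsCotorsion R M)
    (hSM : IsGorensteinInjective S (S →ₗ[R] M)) :
    ∃ (N E : ModuleCat.{u} R) (a : N →ₗ[R] E) (b : E →ₗ[R] M), IsShortExact a b ∧
      Module.Injective R E ∧ IsCotorsion R N ∧ IsGorensteinInjective S (S →ₗ[R] N) := by
  obtain ⟨K, U, _, b, h, hU, hK⟩ := IsGorensteinInjective.hasInjectiveSyzygies S (.of S _) hSM
  let _ : Module R U := Module.compHom U (algebraMap R S)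
  have : IsScalarTower R S U := .of_algebraMap_smul fun _ _ => rfl
  have hRU : Module.Injective R U := injective_of_flat_algebra hU
  have hflat {F : Type u} [AddCommGroup F] [Module R F] (hF : Module.Flat R F) (f : F →ₗ[R] M) :=
    h.exists_homEquiv_comp_eq_of_flat hK.isCotorsion hM hF f
  have hsurj : Function.Surjective (homEquiv b) := fun m => by
    obtain ⟨g, hg⟩ := hflat inferInstance (LinearMap.toSpanSingleton R M m)
    exact ⟨g 1, by simpa using LinearMap.congr_fun hg 1⟩
  have hN := IsShortExact.of_surjective hsurj
  have hNcot : IsCotorsion R (LinearMap.ker (homEquiv b)) := fun F _ _ hF =>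
    (hN.extVanishes_one_iff_forall_exists_lift (.of_injective hRU 0)).2 (hflat hF)
  have hNacyc : IsInjAcyclic R (LinearMap.ker (homEquiv b))
    | V, _, _, hV, 0 => (hN.extVanishes_one_iff_forall_exists_lift (.of_injective hRU 0)).2
        (h.exists_homEquiv_comp_eq_of_injective hK.isInjAcyclic hV)
    | V, _, _, hV, i + 1 => (hN.extVanishes_succ_iff hRU).2
        (hM.isInjAcyclic_of_hom hSM.isInjAcyclic V hV i)
  exact ⟨.of R _, .of R U, _, _, hN, hRU, hNcot, hSM.syzygy (hN.hom hNcot) (injective_hom hRU)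
    (hNcot.isInjAcyclic_hom hNacyc)⟩

lemma IsCotorsion.isGorensteinInjective_of_hom [Module.FaithfullyFlat R S] (hM : IsCotorsion R M)
    (hSM : IsGorensteinInjective S (S →ₗ[R] M)) : IsGorensteinInjective R M :=
  .of_hasInjectiveSyzygies
    (𝒢 := fun N => IsCotorsion R N ∧ IsGorensteinInjective S (S →ₗ[R] N))
    (fun _ hN => exists_syzygy_of_hom hN.1 hN.2)
    (fun _ hN => hN.1.isInjAcyclic_of_hom hN.2.isInjAcyclic) ⟨hM, hSM⟩

end Main

theorem isGorensteinInjective_iff_hom_isGorensteinInjective_and_cotorsion_general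
    (R S : Type u) [CommRing R] [CommRing S] [Algebra R S] [Module.FaithfullyFlat R S]
    (M : Type u) [AddCommGroup M] [Module R M] :
    IsGorensteinInjective R M ↔
      (IsGorensteinInjective S (S →ₗ[R] M) ∧
        ∀ (F : Type u) [AddCommGroup F] [Module R F], Module.Flat R F →
          ∀ i : ℕ, 1 ≤ i →
            Subsingleton (Abelian.Ext (ModuleCat.of R F) (ModuleCat.of R M) i)) := by
  refine ⟨fun hM => ⟨hM.hom, fun F _ _ hF i hi => ?_⟩, fun ⟨hSM, hM⟩ =>
    IsCotorsion.isGorensteinInjective_of_hom (fun F _ _ hF => hM F hF 1 le_rfl) hSM⟩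
  obtain ⟨n, rfl⟩ := Nat.exists_eq_add_of_le' hi
  exact hM.isCotorsion.extVanishes hF n

theorem isGorensteinInjective_iff_hom_isGorensteinInjective_and_cotorsion
    (R S : Type u) [CommRing R] [CommRing S] [IsNoetherianRing R] [IsNoetherianRing S]
    [Algebra R S] [Module.FaithfullyFlat R S] (hdim : ringKrullDim S < ⊤)
    (M : Type u) [AddCommGroup M] [Module R M] :
    IsGorensteinInjective R M ↔
      (IsGorensteinInjective S (S →ₗ[R] M) ∧
        ∀ (F : Type u) [AddCommGroup F] [Module R F], Module.Flat R F →
          ∀ i : ℕ, 1 ≤ i →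
            Subsingleton (Abelian.Ext (ModuleCat.of R F) (ModuleCat.of R M) i)) :=
  isGorensteinInjective_iff_hom_isGorensteinInjective_and_cotorsion_general R S M
end

section
/- Let φ : R → S be a faithfully flat homomorphism of commutative noetherian rings. An R-module M is Gorenstein flat if and only if the S-module S ⊗_R M is Gorenstein flat and Tor_i^R(E, M) = 0 for every injective R-module E and all i ≥ 1. -/
/-!
Let `φ : R → S` be a faithfully flat homomorphism of commutative noetherian rings.
An `R`-module `M` is Gorenstein flat if and only if the `S`-module `S ⊗_R M` is
Gorenstein flat and `Tor_i^R(E, M) = 0` for every injective `R`-module `E` and all `i ≥ 1`.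
-/

universe u

open CategoryTheory TensorProduct

/-- A witness that `G` is a Gorenstein flat `R`-module: an exact complex `F` of flat
`R`-modules (with differentials `d i : F (i+1) →ₗ[R] F i`) such that `E ⊗_R F` is exact
for every injective `R`-module `E`, together with an isomorphism `G ≅ im (F 0 → F (-1))`. -/
structure GorensteinFlatWitness (R : Type u) [CommRing R]
    (G : Type u) [AddCommGroup G] [Module R G] : Type (u + 1) where
  F : ℤ → Type u
  [acg : ∀ i, AddCommGroup (F i)]
  [mod : ∀ i, Module R (F i)]
  flat : ∀ i, Module.Flat R (F i)
  d : ∀ i : ℤ, F (i + 1) →ₗ[R] F i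
  d_comp_d : ∀ i : ℤ, (d i).comp (d (i + 1)) = 0
  exact : ∀ i : ℤ, LinearMap.ker (d i) = LinearMap.range (d (i + 1))
  tensor_exact : ∀ (E : Type u) [AddCommGroup E] [Module R E], Module.Injective R E →
    ∀ i : ℤ, LinearMap.ker (LinearMap.lTensor E (d i)) =
      LinearMap.range (LinearMap.lTensor E (d (i + 1)))
  im_iso : Nonempty (G ≃ₗ[R] LinearMap.range (d (-1)))

/-- `G` is a Gorenstein flat `R`-module. -/
def IsGorensteinFlat (R : Type u) [CommRing R]
    (G : Type u) [AddCommGroup G] [Module R G] : Prop :=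
  Nonempty (GorensteinFlatWitness R G)

/-!
A Gorenstein flat module is one with both a left and a right infinite path of syzygies, in the
sense of short exact sequences `0 → X → G → Q → 0` with `G` flat that stay exact after tensoring
with injectives. Base change along a flat map preserves such paths, and by dimension shifting the
left path of `M` exists exactly when `Tor i E M` vanishes for `E` injective and `i ≥ 1`.

The right path descends along `R → S`. Since every injective `R`-module is a retract of an
injective `S`-module, `X → W` is a suitable embedding over `R` as soon as `S ⊗ X → W` is one
over `S`. Taking character modules turns right syzygies into kernels of surjective injective
precovers, which by Schanuel's lemma are unique up to injective summands. Hence whichever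
syzygy `D` of `X` is produced by such an embedding, the dual of `S ⊗ D` is stably equivalent to
that of the next module on the given path over `S`, and the latter again has a surjective
injective precover `E`. As `S` is noetherian, the dual of `E` is flat, which provides the next
embedding.
-/
section InfinitePath

variable {α : Type*} {r : α → α → Prop} {x : α}

/-- There is an infinite sequence `x = f 0, f 1, f 2, …` in which consecutive terms are related
by `r`. Applied to the syzygy relation and to its converse, this encodes one-sided infinite
resolutions by the sequence of their syzygies. -/
def HasInfinitePath (r : α → α → Prop) (x : α) : Prop :=
  ∃ f : ℕ → α, f 0 = x ∧ ∀ n, r (f n) (f (n + 1))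

namespace HasInfinitePath

theorem exists_next (h : HasInfinitePath r x) : ∃ y, r x y ∧ HasInfinitePath r y := by
  obtain ⟨f, rfl, hf⟩ := h
  exact ⟨f 1, hf 0, fun n ↦ f (n + 1), rfl, fun n ↦ hf (n + 1)⟩

theorem of_forall_exists (P : α → Prop) (step : ∀ x, P x → ∃ y, r x y ∧ P y) (hx : P x) :
    HasInfinitePath r x := by
  choose next hr hP using fun x : Subtype P ↦ step x x.2
  refine ⟨fun n ↦ ((fun y ↦ ⟨next y, hP y⟩)^[n] (⟨x, hx⟩ : Subtype P) : Subtype P), rfl,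
    fun n ↦ ?_⟩
  simp only [Function.iterate_succ_apply']
  exact hr _

theorem map (h : HasInfinitePath r x) {β : Type*} {s : β → β → Prop} (φ : α → β)
    (hφ : ∀ x y, r x y → s (φ x) (φ y)) : HasInfinitePath s (φ x) := by
  obtain ⟨f, rfl, hf⟩ := h
  exact ⟨φ ∘ f, rfl, fun n ↦ hφ _ _ (hf n)⟩

theorem exists_int_path (h : HasInfinitePath r x) (h' : HasInfinitePath (flip r) x) :
    ∃ Z : ℤ → α, Z (-1) = x ∧ ∀ i, r (Z (i + 1)) (Z i) := by
  obtain ⟨f, hf₀, hf⟩ := h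
  obtain ⟨g, hg₀, hg⟩ := h'
  let Z : ℤ → α
    | .ofNat n => g (n + 1)
    | .negSucc n => f n
  refine ⟨Z, hf₀, ?_⟩
  rintro (n | _ | n)
  · exact hg (n + 1)
  · have := hg 0
    rwa [hg₀, ← hf₀] at this
  · exact hf n

end HasInfinitePath

end InfinitePath

section ShortExact

theorem exists_comp_eq_of_baer_of_ker_le {R A B Q : Type*} [Ring R] [AddCommGroup A] [Module R A]
    [AddCommGroup B] [Module R B] [AddCommGroup Q] [Module R Q] (hQ : Module.Baer R Q)
    (φ : A →ₗ[R] B) (ψ : A →ₗ[R] Q) (h : LinearMap.ker φ ≤ LinearMap.ker ψ) :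
    ∃ χ : B →ₗ[R] Q, χ ∘ₗ φ = ψ := by
  obtain ⟨χ, hχ⟩ := hQ.extension_property ((LinearMap.ker φ).liftQ φ le_rfl)
    (LinearMap.ker_eq_bot.1 (Submodule.ker_liftQ_eq_bot' _ _ rfl)) ((LinearMap.ker φ).liftQ ψ h)
  refine ⟨χ, ?_⟩
  rw [← Submodule.liftQ_mkQ (LinearMap.ker φ) φ le_rfl, ← LinearMap.comp_assoc, hχ,
    Submodule.liftQ_mkQ]

theorem characterModule_dual_exact {R A B C : Type*} [CommRing R] [AddCommGroup A] [Module R A]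
    [AddCommGroup B] [Module R B] [AddCommGroup C] [Module R C]
    {f : A →ₗ[R] B} {g : B →ₗ[R] C} (h : Function.Exact f g) :
    Function.Exact (CharacterModule.dual g) (CharacterModule.dual f) := by
  refine fun c ↦ ⟨fun hc ↦ ?_, ?_⟩
  · have hker : LinearMap.ker (g.restrictScalars ℤ) ≤ LinearMap.ker c.toIntLinearMap := by
      intro b hb
      obtain ⟨a, rfl⟩ := (h b).1 hb
      exact DFunLike.congr_fun hc a
    obtain ⟨c', hc'⟩ := exists_comp_eq_of_baer_of_ker_le (Module.Baer.of_divisible _) _ _ hker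
    exact ⟨c'.toAddMonoidHom, CharacterModule.ext _ (LinearMap.congr_fun hc')⟩
  · rintro ⟨c, rfl⟩
    rw [← LinearMap.comp_apply, ← CharacterModule.dual_comp, h.linearMap_comp_eq_zero,
      CharacterModule.dual_zero, LinearMap.zero_apply]

theorem exact_rangeRestrict {R A B C : Type*} [CommRing R] [AddCommGroup A] [Module R A]
    [AddCommGroup B] [Module R B] [AddCommGroup C] [Module R C]
    {f : A →ₗ[R] B} {g : B →ₗ[R] C} (h : Function.Exact f g) : Function.Exact f g.rangeRestrict :=
  LinearMap.exact_iff.2 ((LinearMap.ker_rangeRestrict g).trans h.linearMap_ker_eq)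

/-- `0 → A → B → C → 0` is a short exact sequence of modules, with maps `f` and `g`. -/
structure IsShortExact_s4 {R A B C : Type*} [CommRing R] [AddCommGroup A] [Module R A]
    [AddCommGroup B] [Module R B] [AddCommGroup C] [Module R C]
    (f : A →ₗ[R] B) (g : B →ₗ[R] C) : Prop where
  injective : Function.Injective f
  exact : Function.Exact f g
  surjective : Function.Surjective g

namespace IsShortExact_s4

variable {R A B C A' C' : Type*} [CommRing R] [AddCommGroup A] [Module R A]
  [AddCommGroup B] [Module R B] [AddCommGroup C] [Module R C]
  [AddCommGroup A'] [Module R A'] [AddCommGroup C'] [Module R C']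
  {f : A →ₗ[R] B} {g : B →ₗ[R] C}

theorem subtype_ker (hg : Function.Surjective g) : IsShortExact_s4 (LinearMap.ker g).subtype g :=
  ⟨Subtype.val_injective, LinearMap.exact_subtype_ker_map g, hg⟩

theorem subtype_range (hfg : Function.Exact f g) (hg : Function.Surjective g) :
    IsShortExact_s4 (LinearMap.range f).subtype g :=
  ⟨Subtype.val_injective,
    LinearMap.exact_iff.2 ((LinearMap.exact_iff.1 hfg).trans (Submodule.range_subtype _).symm), hg⟩

theorem mkQ_range (hf : Function.Injective f) : IsShortExact_s4 f (LinearMap.range f).mkQ :=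
  ⟨hf, LinearMap.exact_map_mkQ_range f, Submodule.mkQ_surjective _⟩

theorem congr (h : IsShortExact_s4 f g) (e : A' ≃ₗ[R] A) (e' : C ≃ₗ[R] C') :
    IsShortExact_s4 (f ∘ₗ e.toLinearMap) (e'.toLinearMap ∘ₗ g) :=
  ⟨h.injective.comp e.injective,
    LinearEquiv.precomp_exact_iff_exact.2 (LinearEquiv.postcomp_exact_iff_exact.2 h.exact),
    e'.surjective.comp h.surjective⟩

theorem baseChange (S : Type*) [CommRing S] [Algebra R S] [Module.Flat R S]
    (h : IsShortExact_s4 f g) : IsShortExact_s4 (f.baseChange S) (g.baseChange S) :=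
  ⟨Module.Flat.lTensor_preserves_injective_linearMap f h.injective,
    lTensor_exact S h.exact h.surjective, LinearMap.lTensor_surjective S h.surjective⟩

theorem dual (h : IsShortExact_s4 f g) :
    IsShortExact_s4 (CharacterModule.dual g) (CharacterModule.dual f) :=
  ⟨CharacterModule.dual_injective_of_surjective g h.surjective,
    characterModule_dual_exact h.exact, CharacterModule.dual_surjective_of_injective f h.injective⟩

end IsShortExact_s4

end ShortExact

section InjectivelyPure

variable {R : Type u} [CommRing R]

/-- The map `f` stays injective after tensoring with any injective module. For injective `f` this
is a weakening of purity. -/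
def IsInjectivelyPure {A B : Type*} [AddCommGroup A] [Module R A] [AddCommGroup B] [Module R B]
    (f : A →ₗ[R] B) : Prop :=
  ∀ (E : Type u) [AddCommGroup E] [Module R E], Module.Injective R E →
    Function.Injective (f.lTensor E)

theorem IsInjectivelyPure.comp_linearEquiv {A B A' : Type*} [AddCommGroup A] [Module R A]
    [AddCommGroup B] [Module R B] [AddCommGroup A'] [Module R A']
    {f : A →ₗ[R] B} (hf : IsInjectivelyPure f) (e : A' ≃ₗ[R] A) :
    IsInjectivelyPure (f ∘ₗ e.toLinearMap) := by
  intro E _ _ hE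
  rw [LinearMap.lTensor_comp]
  exact (hf E hE).comp (e.lTensor E).injective

/-- `X` is a syzygy of `Q` in the sense relevant to Gorenstein flatness: there is a short exact
sequence `0 → X → G → Q → 0` with `G` flat that stays exact after tensoring with any injective
module. -/
def IsFlatSyzygy (R : Type u) [CommRing R] (X Q : ModuleCat.{u} R) : Prop :=
  ∃ (G : ModuleCat.{u} R) (f : X →ₗ[R] G) (g : G →ₗ[R] Q),
    IsShortExact_s4 f g ∧ Module.Flat R G ∧ IsInjectivelyPure f

theorem IsFlatSyzygy.congr {X Q X' Q' : ModuleCat.{u} R} (h : IsFlatSyzygy R X Q)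
    (e : X' ≃ₗ[R] X) (e' : Q ≃ₗ[R] Q') : IsFlatSyzygy R X' Q' := by
  obtain ⟨G, f, g, hfg, hG, hf⟩ := h
  exact ⟨G, f ∘ₗ e.toLinearMap, e'.toLinearMap ∘ₗ g, hfg.congr e e', hG, hf.comp_linearEquiv e⟩

end InjectivelyPure

section GorensteinFlat

theorem exact_lTensor_comp_iff_injective {R A B C D : Type*} [CommRing R]
    [AddCommGroup A] [Module R A] [AddCommGroup B] [Module R B]
    [AddCommGroup C] [Module R C] [AddCommGroup D] [Module R D]
    {p : A →ₗ[R] B} {π : B →ₗ[R] C} (hp : Function.Exact p π) (hπ : Function.Surjective π)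
    (ι : C →ₗ[R] D) (E : Type*) [AddCommGroup E] [Module R E] :
    Function.Exact (p.lTensor E) ((ι ∘ₗ π).lTensor E) ↔ Function.Injective (ι.lTensor E) := by
  have hpE := lTensor_exact E hp hπ
  rw [LinearMap.lTensor_comp]
  refine ⟨fun h ↦ (injective_iff_map_eq_zero _).2 fun z hz ↦ ?_,
    fun h ↦ h.comp_exact_iff_exact.2 hpE⟩
  obtain ⟨y, rfl⟩ := LinearMap.lTensor_surjective E hπ z
  exact (hpE y).2 ((h y).1 hz)

variable {R : Type u} [CommRing R] {M : Type u} [AddCommGroup M] [Module R M]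

attribute [instance] GorensteinFlatWitness.acg GorensteinFlatWitness.mod

theorem GorensteinFlatWitness.isFlatSyzygy_range (w : GorensteinFlatWitness R M) (i : ℤ) :
    IsFlatSyzygy R (.of R (LinearMap.range (w.d (i + 1)))) (.of R (LinearMap.range (w.d i))) := by
  have exact_d (j : ℤ) : Function.Exact (w.d (j + 1)) (w.d j).rangeRestrict :=
    exact_rangeRestrict (LinearMap.exact_iff.2 (w.exact j))
  refine ⟨.of R (w.F (i + 1)), (LinearMap.range (w.d (i + 1))).subtype, (w.d i).rangeRestrict,
    .subtype_range (exact_d i) (w.d i).surjective_rangeRestrict, w.flat _,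
    fun E _ _ hE ↦ ?_⟩
  exact (exact_lTensor_comp_iff_injective (exact_d (i + 1))
    (w.d (i + 1)).surjective_rangeRestrict _ E).1
      (LinearMap.exact_iff.2 (w.tensor_exact E hE (i + 1)))

theorem isGorensteinFlat_of_int_path (Z : ℤ → ModuleCat.{u} R)
    (hZ : ∀ i, IsFlatSyzygy R (Z (i + 1)) (Z i)) : IsGorensteinFlat R (Z (-1)) := by
  -- The middle term of the `i`-th sequence becomes `F (i + 1)`; quantifying over `j` with
  -- `i = j + 1` avoids transport along `i - 1 + 1 = i`.
  have hF (i : ℤ) : ∃ (F : ModuleCat.{u} R) (f : Z i →ₗ[R] F), Module.Flat R F ∧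
      Function.Injective f ∧ IsInjectivelyPure f ∧ ∀ j, i = j + 1 →
        ∃ g : F →ₗ[R] Z j, Function.Exact f g ∧ Function.Surjective g := by
    obtain ⟨j, rfl⟩ : ∃ j, i = j + 1 := ⟨i - 1, by ring⟩
    obtain ⟨F, f, g, hfg, hF, hf⟩ := hZ j
    refine ⟨F, f, hF, hfg.injective, hf, fun k hk ↦ ?_⟩
    obtain rfl := add_right_cancel hk
    exact ⟨g, hfg.exact, hfg.surjective⟩
  choose F f flat hf pure hg using hF
  choose g exact hg using fun i ↦ hg (i + 1) i rfl
  have exact_g (i : ℤ) : Function.Exact (f (i + 1) ∘ₗ g (i + 1)) (g i) :=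
    (hg _).comp_exact_iff_exact.2 (exact i)
  have exact_d (i : ℤ) : Function.Exact (f (i + 1) ∘ₗ g (i + 1)) (f i ∘ₗ g i) :=
    (hf i).comp_exact_iff_exact.2 (exact_g i)
  have range_d : LinearMap.range (f (-1) ∘ₗ g (-1)) = LinearMap.range (f (-1)) :=
    LinearMap.range_comp_of_range_eq_top _ (LinearMap.range_eq_top.2 (hg (-1)))
  exact ⟨{
    F := fun i ↦ F i
    flat := flat
    d := fun i ↦ f i ∘ₗ g i
    d_comp_d := fun i ↦ (exact_d i).linearMap_comp_eq_zero
    exact := fun i ↦ (exact_d i).linearMap_ker_eq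
    tensor_exact := fun E _ _ hE i ↦ ((exact_lTensor_comp_iff_injective (exact_g i) (hg i)
      (f i) E).2 (pure i E hE)).linearMap_ker_eq
    im_iso := ⟨(LinearEquiv.ofInjective _ (hf (-1))).trans (.ofEq _ _ range_d.symm)⟩ }⟩

theorem isGorensteinFlat_iff_hasInfinitePath :
    IsGorensteinFlat R M ↔ HasInfinitePath (IsFlatSyzygy R) (.of R M) ∧
      HasInfinitePath (flip (IsFlatSyzygy R)) (.of R M) := by
  refine ⟨fun ⟨w⟩ ↦ ?_, fun ⟨h, h'⟩ ↦ ?_⟩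
  · let P (X : ModuleCat.{u} R) : Prop := ∃ i, Nonempty (X ≃ₗ[R] LinearMap.range (w.d i))
    have hM : P (.of R M) := ⟨-1, w.im_iso⟩
    refine ⟨.of_forall_exists P ?_ hM, .of_forall_exists P ?_ hM⟩ <;> rintro X ⟨i, ⟨e⟩⟩
    · obtain ⟨j, rfl⟩ : ∃ j, i = j + 1 := ⟨i - 1, by ring⟩
      exact ⟨_, (w.isFlatSyzygy_range j).congr e (.refl R _), j, ⟨.refl R _⟩⟩
    · exact ⟨_, (w.isFlatSyzygy_range i).congr (.refl R _) e.symm, i + 1, ⟨.refl R _⟩⟩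
  · obtain ⟨Z, hZ₁, hZ⟩ := h.exists_int_path h'
    have := isGorensteinFlat_of_int_path Z hZ
    rwa [hZ₁] at this

end GorensteinFlat

section TorVanishing

section Balance

variable {R A B C L Q E : Type*} [CommRing R] [AddCommGroup A] [Module R A]
  [AddCommGroup B] [Module R B] [AddCommGroup C] [Module R C] [AddCommGroup L] [Module R L]
  [AddCommGroup Q] [Module R Q] [AddCommGroup E] [Module R E]
  {i : L →ₗ[R] Q} {p : Q →ₗ[R] E} {f : A →ₗ[R] B} {g : B →ₗ[R] C}

theorem lTensor_rTensor_comm (i : L →ₗ[R] Q) (f : A →ₗ[R] B) (z : L ⊗[R] A) :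
    f.lTensor Q (i.rTensor A z) = i.rTensor B (f.lTensor L z) :=
  LinearMap.congr_fun ((LinearMap.lTensor_comp_rTensor _ i f).trans
    (LinearMap.rTensor_comp_lTensor _ i f).symm) z

theorem lTensor_injective_of_rTensor_injective [Module.Flat R Q] (hip : IsShortExact_s4 i p)
    (hfg : IsShortExact_s4 f g) (h : Function.Injective (i.rTensor C)) :
    Function.Injective (f.lTensor E) := by
  refine (injective_iff_map_eq_zero _).2 fun z hz ↦ ?_
  obtain ⟨x, rfl⟩ := LinearMap.rTensor_surjective A hip.surjective z
  rw [lTensor_rTensor_comm] at hz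
  obtain ⟨y, hy⟩ := (rTensor_exact B hip.exact hip.surjective _).1 hz
  have hgy : g.lTensor L y = 0 := by
    apply h
    rw [← lTensor_rTensor_comm, hy, map_zero,
      (lTensor_exact Q hfg.exact hfg.surjective).apply_apply_eq_zero]
  obtain ⟨w, rfl⟩ := (lTensor_exact L hfg.exact hfg.surjective _).1 hgy
  rw [← lTensor_rTensor_comm] at hy
  rw [← Module.Flat.lTensor_preserves_injective_linearMap f hfg.injective hy,
    (rTensor_exact A hip.exact hip.surjective).apply_apply_eq_zero]

theorem lTensor_injective_iff_rTensor_injective [Module.Flat R Q] [Module.Flat R B]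
    (hip : IsShortExact_s4 i p) (hfg : IsShortExact_s4 f g) :
    Function.Injective (f.lTensor E) ↔ Function.Injective (i.rTensor C) := by
  refine ⟨fun h ↦ ?_, lTensor_injective_of_rTensor_injective hip hfg⟩
  rw [← LinearMap.lTensor_inj_iff_rTensor_inj]
  rw [LinearMap.lTensor_inj_iff_rTensor_inj] at h
  exact lTensor_injective_of_rTensor_injective hfg hip h

theorem lTensor_syzygy_injective_iff_rTensor_syzygy_injective [Module.Flat R Q] [Module.Flat R B]
    (hi : Function.Injective i) (hf : Function.Injective f) :
    Function.Injective (f.lTensor L) ↔ Function.Injective (i.rTensor A) := by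
  have hiB := Module.Flat.rTensor_preserves_injective_linearMap (M := B) i hi
  have hfQ := Module.Flat.lTensor_preserves_injective_linearMap (M := Q) f hf
  rw [← hiB.of_comp_iff, ← hfQ.of_comp_iff]
  exact iff_of_eq (congrArg _ (funext fun z ↦ (lTensor_rTensor_comm i f z).symm))

end Balance

variable {R : Type u} [CommRing R]

/-- The vanishing of `Tor (n + 1) E M`, reduced by dimension shifting along free covers of `E` to
the injectivity of `K ⊗ M → F ⊗ M` for a syzygy `K ⊆ F` of `E`. This elementary form is what
flat presentations of `M` interact with; `subsingleton_tor_iff_torVanishes` identifies it with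
the vanishing of the derived functor. -/
def TorVanishes (R : Type u) [CommRing R] : ℕ → (E M : Type u) → [AddCommGroup E] → [Module R E] →
    [AddCommGroup M] → [Module R M] → Prop
  | 0, E, M, _, _, _, _ => Function.Injective
      ((LinearMap.ker (Finsupp.linearCombination R (id : E → E))).subtype.rTensor M)
  | n + 1, E, M, _, _, _, _ =>
      TorVanishes R n (LinearMap.ker (Finsupp.linearCombination R (id : E → E))) M

namespace TorVanishes

variable {K P M : Type u} [AddCommGroup K] [Module R K] [AddCommGroup P] [Module R P]
  [AddCommGroup M] [Module R M] [Module.Flat R P] {f : K →ₗ[R] P} {g : P →ₗ[R] M}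

theorem zero_iff (h : IsShortExact_s4 f g) (E : Type u) [AddCommGroup E] [Module R E] :
    TorVanishes R 0 E M ↔ Function.Injective (f.lTensor E) :=
  (lTensor_injective_iff_rTensor_injective
    (.subtype_ker (Finsupp.linearCombination_id_surjective R E)) h).symm

theorem succ_iff (h : IsShortExact_s4 f g) (n : ℕ) (E : Type u) [AddCommGroup E] [Module R E] :
    TorVanishes R (n + 1) E M ↔ TorVanishes R n E K := by
  induction n generalizing E with
  | zero => exact (zero_iff h _).trans (lTensor_syzygy_injective_iff_rTensor_syzygy_injective
      (Submodule.injective_subtype _) h.injective)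
  | succ _ ih => exact ih _

theorem iff_exact_lTensor (E : Type u) [AddCommGroup E] [Module R E] (n : ℕ) {M : Type u}
    [AddCommGroup M] [Module R M] {P : ℕ → Type u} [∀ n, AddCommGroup (P n)]
    [∀ n, Module R (P n)] [∀ n, Module.Flat R (P n)] {d : ∀ n, P (n + 1) →ₗ[R] P n}
    {ε : P 0 →ₗ[R] M} (hd : ∀ n, Function.Exact (d (n + 1)) (d n)) (hdε : Function.Exact (d 0) ε)
    (hε : Function.Surjective ε) :
    TorVanishes R n E M ↔ Function.Exact ((d (n + 1)).lTensor E) ((d n).lTensor E) := by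
  induction n generalizing M P with
  | zero =>
    exact (zero_iff (.subtype_range hdε hε) E).trans (exact_lTensor_comp_iff_injective
      (exact_rangeRestrict (hd 0)) (d 0).surjective_rangeRestrict _ E).symm
  | succ n ih =>
    exact (succ_iff (.subtype_range hdε hε) n E).trans (ih (P := fun n ↦ P (n + 1))
      (d := fun n ↦ d (n + 1)) (fun n ↦ hd (n + 1)) (exact_rangeRestrict (hd 0))
      (d 0).surjective_rangeRestrict)

end TorVanishes

theorem subsingleton_tor_iff_torVanishes (n : ℕ) (E M : Type u) [AddCommGroup E] [Module R E]
    [AddCommGroup M] [Module R M] :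
    Subsingleton (((Tor (ModuleCat.{u} R) (n + 1)).obj (ModuleCat.of R E)).obj
      (ModuleCat.of R M)) ↔ TorVanishes R n E M := by
  let P := ProjectiveResolution.of (ModuleCat.of R M)
  let F := (MonoidalCategory.tensoringLeft (ModuleCat.{u} R)).obj (ModuleCat.of R E)
  have flat (k : ℕ) : Module.Flat R (P.complex.X k) :=
    have := (IsProjective.iff_projective (R := R) (P.complex.X k)).2 (P.projective k)
    inferInstance
  have exact_iff := TorVanishes.iff_exact_lTensor E n
    (P := fun k ↦ P.complex.X k) (d := fun k ↦ (P.complex.d (k + 1) k).hom) (M := M)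
    (fun k ↦ (ShortComplex.ShortExact.moduleCat_exact_iff_function_exact _).1 (P.exact_succ k))
    ((ShortComplex.ShortExact.moduleCat_exact_iff_function_exact _).1 P.exact₀)
    (ε := (P.π.f 0).hom) ((ModuleCat.epi_iff_surjective _).1 inferInstance)
  rw [← ModuleCat.isZero_iff_subsingleton, exact_iff]
  refine (P.isoLeftDerivedObj F (n + 1)).isZero_iff.trans ?_
  change Limits.IsZero (HomologicalComplex.homology _ (n + 1)) ↔ _
  rw [← HomologicalComplex.exactAt_iff_isZero_homology,
    HomologicalComplex.exactAt_iff' _ (n + 2) (n + 1) n (by simp only [ChainComplex.prev]; rfl)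
      (by simp), ShortComplex.ShortExact.moduleCat_exact_iff_function_exact]
  rfl

theorem hasInfinitePath_flip_isFlatSyzygy_iff {M : ModuleCat.{u} R} :
    HasInfinitePath (flip (IsFlatSyzygy R)) M ↔ ∀ (E : Type u) [AddCommGroup E] [Module R E],
      Module.Injective R E → ∀ n, TorVanishes R n E M := by
  refine ⟨fun hM E _ _ hE n ↦ ?_, fun hM ↦ .of_forall_exists (fun M ↦ ∀ (E : Type u)
    [AddCommGroup E] [Module R E], Module.Injective R E → ∀ n, TorVanishes R n E M)
    (fun M hM ↦ ?_) hM⟩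
  · induction n generalizing M with
    | zero =>
      obtain ⟨K, ⟨P, f, g, hfg, hP, hf⟩, -⟩ := hM.exists_next
      exact (TorVanishes.zero_iff hfg E).2 (hf E hE)
    | succ n ih =>
      obtain ⟨K, ⟨P, f, g, hfg, hP, -⟩, hK⟩ := hM.exists_next
      exact (TorVanishes.succ_iff hfg n E).2 (ih hK)
  · have cover := IsShortExact_s4.subtype_ker (Finsupp.linearCombination_id_surjective R M)
    have syzygy : IsFlatSyzygy R
        (.of R (LinearMap.ker (Finsupp.linearCombination R (id : M → M)))) M :=
      ⟨.of R (M →₀ R), _, _, cover, Module.Flat.of_free,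
        fun E _ _ hE ↦ (TorVanishes.zero_iff cover E).1 (hM E hE 0)⟩
    exact ⟨_, syzygy, fun E _ _ hE n ↦ (TorVanishes.succ_iff cover n E).1 (hM E hE (n + 1))⟩

theorem hasInfinitePath_flip_isFlatSyzygy_iff_subsingleton_tor {M : Type u} [AddCommGroup M]
    [Module R M] : HasInfinitePath (flip (IsFlatSyzygy R)) (.of R M) ↔
      ∀ (E : Type u) [AddCommGroup E] [Module R E], Module.Injective R E → ∀ i : ℕ, 1 ≤ i →
        Subsingleton (((Tor (ModuleCat.{u} R) i).obj (ModuleCat.of R E)).obj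
          (ModuleCat.of R M)) := by
  refine hasInfinitePath_flip_isFlatSyzygy_iff.trans
    (forall₄_congr fun E _ _ _ ↦ ⟨fun h i hi ↦ ?_, fun h n ↦ ?_⟩)
  · obtain ⟨n, rfl⟩ := Nat.exists_eq_add_of_le' hi
    exact (subsingleton_tor_iff_torVanishes n E M).2 (h n)
  · exact (subsingleton_tor_iff_torVanishes n E M).1 (h (n + 1) n.succ_pos)

end TorVanishing

section BaseChange

theorem lTensor_injective_of_retract {R A B E J : Type*} [CommRing R] [AddCommGroup A] [Module R A]
    [AddCommGroup B] [Module R B] [AddCommGroup E] [Module R E] [AddCommGroup J] [Module R J]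
    {i : E →ₗ[R] J} {p : J →ₗ[R] E} (hpi : p ∘ₗ i = .id) {f : A →ₗ[R] B}
    (hf : Function.Injective (f.lTensor J)) : Function.Injective (f.lTensor E) := by
  have hi : Function.LeftInverse (p.rTensor A) (i.rTensor A) := fun z ↦ by
    rw [← LinearMap.comp_apply, ← LinearMap.rTensor_comp, hpi, LinearMap.rTensor_id,
      LinearMap.id_apply]
  have := hf.comp hi.injective
  rw [show f.lTensor J ∘ i.rTensor A = i.rTensor B ∘ f.lTensor E from
    funext (lTensor_rTensor_comm i f)] at this
  exact this.of_comp

theorem injective_restrictScalars_of_flat {R : Type*} {S J : Type u} [CommRing R] [CommRing S]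
    [Algebra R S] [Module.Flat R S] [AddCommGroup J] [Module R J] [Module S J]
    [IsScalarTower R S J] (hJ : Module.Injective S J) : Module.Injective R J := by
  refine ⟨fun X Y _ _ _ _ f hf g ↦ ?_⟩
  obtain ⟨h, hh⟩ := hJ.out (f.baseChange S)
    (Module.Flat.lTensor_preserves_injective_linearMap (M := S) f hf) (LinearMap.liftBaseChange S g)
  exact ⟨h.restrictScalars R ∘ₗ TensorProduct.mk R S Y 1, fun x ↦ by simpa using hh (1 ⊗ₜ x)⟩

variable {R S : Type u} [CommRing R] [CommRing S] [Algebra R S]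

theorem IsInjectivelyPure.baseChange [Module.Flat R S] {A B : Type*} [AddCommGroup A] [Module R A]
    [AddCommGroup B] [Module R B] {f : A →ₗ[R] B} (hf : IsInjectivelyPure f) :
    IsInjectivelyPure (f.baseChange S) := by
  intro J _ _ hJ
  let _ : Module R J := .compHom J (algebraMap R S)
  have : IsScalarTower R S J := .of_algebraMap_smul fun _ _ ↦ rfl
  let eA := AlgebraTensorModule.cancelBaseChange R S S J A
  let eB := AlgebraTensorModule.cancelBaseChange R S S J B
  have natural : eB ∘ (f.baseChange S).lTensor J = f.lTensor J ∘ eA := by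
    funext z
    induction z with
    | zero => simp
    | add y z hy hz => simp_all
    | tmul x y =>
      induction y with
      | zero => simp
      | add y z hy hz => simp_all [TensorProduct.tmul_add]
      | tmul s y => simp [eA, eB]
  have := (hf J (injective_restrictScalars_of_flat hJ)).comp eA.injective
  rw [← natural] at this
  exact this.of_comp

theorem IsFlatSyzygy.baseChange [Module.Flat R S] {X Q : ModuleCat.{u} R}
    (h : IsFlatSyzygy R X Q) : IsFlatSyzygy S (.of S (S ⊗[R] X)) (.of S (S ⊗[R] Q)) := by
  obtain ⟨G, f, g, hfg, hG, hf⟩ := h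
  exact ⟨.of S (S ⊗[R] G), f.baseChange S, g.baseChange S, hfg.baseChange S,
    inferInstanceAs (Module.Flat S (S ⊗[R] G)), hf.baseChange⟩

theorem exists_injective_linearMap_injective_module (N : Type u) [AddCommGroup N]
    [Module S N] : ∃ (J : ModuleCat.{u} S) (j : N →ₗ[S] J),
      Module.Injective S J ∧ Function.Injective j := by
  let J := Injective.under (ModuleCat.of S N)
  have hJ : Injective J := inferInstance
  exact ⟨J, (Injective.ι (ModuleCat.of S N)).hom, (Module.injective_iff_injective_object S J).2 hJ,
    (ModuleCat.mono_iff_injective _).1 inferInstance⟩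

variable [Module.FaithfullyFlat R S]

theorem exists_retraction_from_injective (E : Type u) [AddCommGroup E] [Module R E]
    (hE : Module.Injective R E) :
    ∃ (J : Type u) (_ : AddCommGroup J) (_ : Module S J) (_ : Module R J)
      (_ : IsScalarTower R S J) (i : E →ₗ[R] J) (p : J →ₗ[R] E),
      Module.Injective S J ∧ p ∘ₗ i = .id := by
  obtain ⟨J, j, hJ, hj⟩ := exists_injective_linearMap_injective_module (S := S) (S ⊗[R] E)
  let _ : Module R J := .compHom J (algebraMap R S)
  have : IsScalarTower R S J := .of_algebraMap_smul fun _ _ ↦ rfl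
  obtain ⟨p, hp⟩ := Module.Injective.extension_property R E E J
    (j.restrictScalars R ∘ₗ TensorProduct.mk R S E 1)
    (hj.comp (Module.FaithfullyFlat.tensorProduct_mk_injective E)) .id
  exact ⟨J, _, _, _, this, _, p, hJ, hp⟩

theorem IsInjectivelyPure.comp_mk_one {X W : Type u} [AddCommGroup X] [Module R X]
    [AddCommGroup W] [Module S W] [Module R W] [IsScalarTower R S W]
    {a : S ⊗[R] X →ₗ[S] W} (ha : IsInjectivelyPure a) :
    IsInjectivelyPure (a.restrictScalars R ∘ₗ TensorProduct.mk R S X 1) := by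
  intro E _ _ hE
  obtain ⟨J, _, _, _, _, i, p, hJ, hpi⟩ := exists_retraction_from_injective (S := S) E hE
  refine lTensor_injective_of_retract hpi ?_
  let e := (AlgebraTensorModule.cancelBaseChange R S S J X).symm
  let ψ : J ⊗[R] W →ₗ[R] J ⊗[S] W := TensorProduct.mapOfCompatibleSMul S R R J W
  let f := a.restrictScalars R ∘ₗ TensorProduct.mk R S X 1
  have factor : ψ ∘ f.lTensor J = a.lTensor J ∘ e := by
    funext z
    induction z with
    | zero => simp
    | add y z hy hz => simp_all
    | tmul x y => simp [ψ, f, e]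
  have := (ha J hJ).comp e.injective
  rw [← factor] at this
  exact this.of_comp

end BaseChange

section CharacterModule

theorem characterModule_sum_apply {A ι : Type*} [AddCommGroup A] (s : Finset ι)
    (c : ι → CharacterModule A) (a : A) : (∑ i ∈ s, c i) a = ∑ i ∈ s, c i a :=
  AddMonoidHom.finsetSum_apply _ _ _

theorem exists_forall_eq_smul_of_baer {R J ι : Type*} [CommRing R] [AddCommGroup J] [Module R J]
    [Fintype ι] (hJ : Module.Baer R J) (f : ι → R) (e : ι → J)
    (h : ∀ c : ι → R, ∑ i, c i * f i = 0 → ∑ i, c i • e i = 0) : ∃ y, ∀ i, e i = f i • y := by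
  classical
  obtain ⟨χ, hχ⟩ := exists_comp_eq_of_baer_of_ker_le hJ (Fintype.linearCombination R f)
    (Fintype.linearCombination R e) fun c hc ↦ h c hc
  refine ⟨χ 1, fun i ↦ ?_⟩
  have := LinearMap.congr_fun hχ (Pi.single i 1)
  simp only [LinearMap.comp_apply, Fintype.linearCombination_apply_single, one_smul] at this
  rw [← this, ← map_smul, smul_eq_mul, mul_one]

/-- The relation `∑ f i • x i = 0` says that the character `∑ x i ∘ proj i` of `ι → J` vanishes on
the kernel of the matrix whose rows generate the relations among the `f i`, so it factors through
that matrix. -/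
theorem characterModule_isTrivialRelation_of_baer {R J : Type*} [CommRing R] [IsNoetherianRing R]
    [AddCommGroup J] [Module R J] (hJ : Module.Baer R J) {ι : Type*} [Fintype ι] (f : ι → R)
    (x : ι → CharacterModule J) (hx : ∑ i, f i • x i = 0) : Module.IsTrivialRelation f x := by
  classical
  obtain ⟨k, b, hb⟩ := Submodule.fg_iff_exists_fin_generating_family.1
    (IsNoetherian.noetherian (LinearMap.ker (Fintype.linearCombination R f)))
  let α : (ι → J) →ₗ[R] (Fin k → J) := LinearMap.pi fun j ↦ ∑ i, b j i • LinearMap.proj i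
  let χ : CharacterModule (ι → J) := ∑ i, CharacterModule.dual (LinearMap.proj (R := R) i) (x i)
  have χ_apply (e : ι → J) : χ e = ∑ i, x i (e i) := characterModule_sum_apply _ _ _
  have χ_ker (e : ι → J) (he : α e = 0) : χ e = 0 := by
    obtain ⟨y, hy⟩ := exists_forall_eq_smul_of_baer hJ f e fun c hc ↦ by
      have hc : c ∈ Submodule.span R (Set.range b) := hb ▸ hc
      have hspan : Submodule.span R (Set.range b) ≤
          LinearMap.ker (Fintype.linearCombination R e) := Submodule.span_le.2 <| by
        rintro _ ⟨j, rfl⟩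
        simpa [α, Fintype.linearCombination_apply] using congrFun he j
      exact hspan hc
    have hxy := DFunLike.congr_fun hx y
    rw [characterModule_sum_apply] at hxy
    rw [χ_apply, funext hy]
    exact hxy
  obtain ⟨d, hd⟩ := (characterModule_dual_exact (LinearMap.exact_subtype_ker_map α) χ).1 <|
    CharacterModule.ext _ fun e ↦ χ_ker e e.2
  refine ⟨k, fun i j ↦ b j i,
    fun j ↦ CharacterModule.dual (LinearMap.single R (fun _ ↦ J) j) d, fun i ↦ ?_, fun j ↦ ?_⟩
  · refine CharacterModule.ext _ fun e ↦ ?_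
    have α_single : α (Pi.single i e) = ∑ j, Pi.single j (b j i • e) := by
      ext j
      simp [α, Pi.single_apply]
    have χ_single : χ (Pi.single i e) = x i e := by
      rw [χ_apply, Fintype.sum_eq_single i fun j hj ↦ by rw [Pi.single_eq_of_ne hj, map_zero],
        Pi.single_eq_same]
    rw [← χ_single, ← hd, characterModule_sum_apply]
    exact (congrArg d α_single).trans (map_sum d _ _)
  · have : b j ∈ LinearMap.ker (Fintype.linearCombination R f) :=
      hb ▸ Submodule.subset_span ⟨j, rfl⟩
    simpa [Fintype.linearCombination_apply, mul_comm] using this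

theorem flat_characterModule_of_injective {R J : Type u} [CommRing R] [IsNoetherianRing R]
    [AddCommGroup J] [Module R J] (hJ : Module.Injective R J) :
    Module.Flat R (CharacterModule J) :=
  .of_forall_isTrivialRelation fun hx ↦
    characterModule_isTrivialRelation_of_baer (.of_injective hJ) _ _ hx

end CharacterModule

section InjectivePrecover

theorem lTensor_injective_iff_dual_compRight_surjective {R A B J : Type*} [CommRing R]
    [AddCommGroup A] [Module R A] [AddCommGroup B] [Module R B] [AddCommGroup J] [Module R J]
    {f : A →ₗ[R] B} : Function.Injective (f.lTensor J) ↔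
      Function.Surjective ((CharacterModule.dual f).compRight R (M := J)) := by
  have conj : CharacterModule.homEquiv.symm.toLinearMap ∘ₗ CharacterModule.dual (f.lTensor J) ∘ₗ
      CharacterModule.homEquiv.toLinearMap = (CharacterModule.dual f).compRight R (M := J) := rfl
  simp [← conj, CharacterModule.dual_surjective_iff_injective]

/-- The canonical map from a module to its double character module. -/
def characterModuleEval (R A : Type*) [CommRing R] [AddCommGroup A] [Module R A] :
    A →ₗ[R] CharacterModule (CharacterModule A) where
  toFun a := AddMonoidHom.eval a
  map_add' a b := CharacterModule.ext _ fun c ↦ map_add c a b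
  map_smul' _ _ := rfl

theorem characterModuleEval_injective (R A : Type*) [CommRing R] [AddCommGroup A] [Module R A] :
    Function.Injective (characterModuleEval R A) :=
  (injective_iff_map_eq_zero _).2 fun _ ha ↦
    CharacterModule.eq_zero_of_character_apply (DFunLike.congr_fun ha)

variable {R : Type u} [CommRing R]

theorem injective_prod_s4 {I J : Type u} [AddCommGroup I] [Module R I] [AddCommGroup J] [Module R J]
    (hI : Module.Injective R I) (hJ : Module.Injective R J) : Module.Injective R (I × J) := by
  refine ⟨fun X Y _ _ _ _ f hf g ↦ ?_⟩
  obtain ⟨a, ha⟩ := hI.out f hf (LinearMap.fst R I J ∘ₗ g)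
  obtain ⟨b, hb⟩ := hJ.out f hf (LinearMap.snd R I J ∘ₗ g)
  exact ⟨a.prod b, fun x ↦ Prod.ext (ha x) (hb x)⟩

/-- The map `p` is an injective precover: its domain is injective and every map from an injective
module into its codomain factors through it. It need not be surjective. -/
structure IsInjectivePrecover {E Y : Type u} [AddCommGroup E] [Module R E]
    [AddCommGroup Y] [Module R Y] (p : E →ₗ[R] Y) : Prop where
  injective_domain : Module.Injective R E
  exists_comp_eq : ∀ (J : Type u) [AddCommGroup J] [Module R J], Module.Injective R J →
    ∀ k : J →ₗ[R] Y, ∃ k' : J →ₗ[R] E, p ∘ₗ k' = k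

variable {A B E N Y Z I : Type u} [AddCommGroup A] [Module R A] [AddCommGroup B] [Module R B]
  [AddCommGroup E] [Module R E] [AddCommGroup N] [Module R N] [AddCommGroup Y] [Module R Y]
  [AddCommGroup Z] [Module R Z] [AddCommGroup I] [Module R I]

theorem IsInjectivelyPure.isInjectivePrecover_dual [Module.Flat R B] {f : A →ₗ[R] B}
    (hf : IsInjectivelyPure f) : IsInjectivePrecover (CharacterModule.dual f) :=
  ⟨Module.Flat.iff_characterModule_injective.1 inferInstance,
    fun J _ _ hJ ↦ lTensor_injective_iff_dual_compRight_surjective.1 (hf J hJ)⟩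

namespace IsInjectivePrecover

variable {p : E →ₗ[R] Y}

theorem isInjectivelyPure_dual_comp_eval {p : E →ₗ[R] CharacterModule N}
    (hp : IsInjectivePrecover p) :
    IsInjectivelyPure (CharacterModule.dual p ∘ₗ characterModuleEval R N) := by
  intro J _ _ hJ
  refine lTensor_injective_iff_dual_compRight_surjective.2 fun k ↦ ?_
  obtain ⟨k', rfl⟩ := hp.exists_comp_eq J hJ k
  exact ⟨characterModuleEval R E ∘ₗ k', rfl⟩

theorem comp_of_comp_eq_id (hp : IsInjectivePrecover p) {q : Y →ₗ[R] Z} {s : Z →ₗ[R] Y}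
    (hqs : q ∘ₗ s = .id) : IsInjectivePrecover (q ∘ₗ p) := by
  refine ⟨hp.injective_domain, fun J _ _ hJ k ↦ ?_⟩
  obtain ⟨k', hk'⟩ := hp.exists_comp_eq J hJ (s ∘ₗ k)
  exact ⟨k', by rw [LinearMap.comp_assoc, hk', ← LinearMap.comp_assoc, hqs, LinearMap.id_comp]⟩

theorem prodMap_id (hp : IsInjectivePrecover p) (hI : Module.Injective R I) :
    IsInjectivePrecover (p.prodMap (.id : I →ₗ[R] I)) := by
  refine ⟨injective_prod_s4 hp.injective_domain hI, fun J _ _ hJ k ↦ ?_⟩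
  obtain ⟨k', hk'⟩ := hp.exists_comp_eq J hJ (LinearMap.fst R Y I ∘ₗ k)
  exact ⟨k'.prod (LinearMap.snd R Y I ∘ₗ k),
    LinearMap.ext fun x ↦ Prod.ext (LinearMap.congr_fun hk' x) rfl⟩

end IsInjectivePrecover

end InjectivePrecover

section Schanuel

theorem nonempty_prod_equiv_eqLocus {R K E E' Y : Type*} [CommRing R] [AddCommGroup K] [Module R K]
    [AddCommGroup E] [Module R E] [AddCommGroup E'] [Module R E'] [AddCommGroup Y] [Module R Y]
    {i : K →ₗ[R] E} {p : E →ₗ[R] Y} (h : IsShortExact_s4 i p) (u : E' →ₗ[R] E) :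
    Nonempty ((K × E') ≃ₗ[R]
      LinearMap.eqLocus (p ∘ₗ LinearMap.fst R E E') (p ∘ₗ u ∘ₗ LinearMap.snd R E E')) := by
  let φ : K × E' →ₗ[R] E × E' := (i.coprod u).prod (LinearMap.snd R K E')
  have φ_injective : Function.Injective φ := by
    rintro ⟨k, x⟩ ⟨l, y⟩ hxy
    obtain ⟨hkl, rfl⟩ := Prod.ext_iff.1 hxy
    exact Prod.ext (h.injective (add_right_cancel hkl)) rfl
  have range_φ : LinearMap.range φ =
      LinearMap.eqLocus (p ∘ₗ LinearMap.fst R E E') (p ∘ₗ u ∘ₗ LinearMap.snd R E E') := by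
    ext ⟨x, y⟩
    constructor
    · rintro ⟨⟨k, z⟩, hkz⟩
      obtain ⟨rfl, rfl⟩ := Prod.ext_iff.1 hkz
      simp [φ, h.exact.apply_apply_eq_zero]
    · intro hxy
      obtain ⟨k, hk⟩ := (h.exact (x - u y)).1 ((map_sub p _ _).trans (sub_eq_zero.2 hxy))
      exact ⟨(k, y), by simp [φ, hk]⟩
  exact ⟨(LinearEquiv.ofInjective φ φ_injective).trans (.ofEq _ _ range_φ)⟩

theorem nonempty_prod_equiv_prod_of_comp_eq {R K K' E E' Y : Type*} [CommRing R]
    [AddCommGroup K] [Module R K] [AddCommGroup K'] [Module R K']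
    [AddCommGroup E] [Module R E] [AddCommGroup E'] [Module R E'] [AddCommGroup Y] [Module R Y]
    {i : K →ₗ[R] E} {p : E →ₗ[R] Y} {i' : K' →ₗ[R] E'} {p' : E' →ₗ[R] Y}
    (h : IsShortExact_s4 i p) (h' : IsShortExact_s4 i' p') {u : E' →ₗ[R] E} (hu : p ∘ₗ u = p')
    {v : E →ₗ[R] E'} (hv : p' ∘ₗ v = p) : Nonempty ((K × E') ≃ₗ[R] (K' × E)) := by
  obtain ⟨e⟩ := nonempty_prod_equiv_eqLocus h u
  obtain ⟨e'⟩ := nonempty_prod_equiv_eqLocus h' v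
  refine ⟨e.trans (.trans (.ofSubmodules (LinearEquiv.prodComm R E E') _ _ ?_) e'.symm)⟩
  rw [← LinearMap.comp_assoc, ← LinearMap.comp_assoc, hu, hv,
    Submodule.map_equiv_eq_comap_symm]
  ext ⟨x, y⟩
  exact eq_comm

end Schanuel

section PrecoverSyzygy

/-- `K` is a syzygy of `Y` relative to injective precovers: there is a short exact sequence
`0 → K → E → Y → 0` whose second map is an injective precover. -/
def IsPrecoverSyzygy (R : Type u) [CommRing R] (K Y : Type u) [AddCommGroup K] [Module R K]
    [AddCommGroup Y] [Module R Y] : Prop :=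
  ∃ (E : ModuleCat.{u} R) (i : K →ₗ[R] E) (p : E →ₗ[R] Y),
    IsShortExact_s4 i p ∧ IsInjectivePrecover p

/-- `Y` and `Y'` become isomorphic after adding injective direct summands. -/
def StablyEquivalent (R : Type u) [CommRing R] (Y Y' : Type u) [AddCommGroup Y] [Module R Y]
    [AddCommGroup Y'] [Module R Y'] : Prop :=
  ∃ I I' : ModuleCat.{u} R, Module.Injective R I ∧ Module.Injective R I' ∧
    Nonempty ((Y × I) ≃ₗ[R] (Y' × I'))

variable {R : Type u} [CommRing R]

theorem IsFlatSyzygy.isPrecoverSyzygy_characterModule {X Q : ModuleCat.{u} R}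
    (h : IsFlatSyzygy R X Q) : IsPrecoverSyzygy R (CharacterModule Q) (CharacterModule X) := by
  obtain ⟨G, f, g, hfg, hG, hf⟩ := h
  exact ⟨.of R (CharacterModule G), CharacterModule.dual g, CharacterModule.dual f, hfg.dual,
    hf.isInjectivePrecover_dual⟩

variable {K K' Y Y' I : Type u} [AddCommGroup K] [Module R K] [AddCommGroup K'] [Module R K']
  [AddCommGroup Y] [Module R Y] [AddCommGroup Y'] [Module R Y'] [AddCommGroup I] [Module R I]

namespace IsPrecoverSyzygy

theorem congr (h : IsPrecoverSyzygy R K Y) (e : Y ≃ₗ[R] Y') : IsPrecoverSyzygy R K Y' := by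
  obtain ⟨E, i, p, hip, hp⟩ := h
  exact ⟨E, _, _, hip.congr (.refl R K) e, hp.comp_of_comp_eq_id e.comp_symm⟩

theorem prod_injective (h : IsPrecoverSyzygy R K Y) (hI : Module.Injective R I) :
    IsPrecoverSyzygy R K (Y × I) := by
  obtain ⟨E, i, p, hip, hp⟩ := h
  have exact_inl : Function.Exact (LinearMap.inl R E I ∘ₗ i) (p.prodMap (.id : I →ₗ[R] I)) := by
    rintro ⟨x, y⟩
    simp [Prod.ext_iff, hip.exact x, eq_comm (a := (0 : I)), and_comm]
  exact ⟨.of R (E × I), LinearMap.inl R E I ∘ₗ i, p.prodMap .id,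
    ⟨LinearMap.inl_injective.comp hip.injective, exact_inl,
      hip.surjective.prodMap Function.surjective_id⟩, hp.prodMap_id hI⟩

theorem stablyEquivalent (h : IsPrecoverSyzygy R K Y) (h' : IsPrecoverSyzygy R K' Y) :
    StablyEquivalent R K K' := by
  obtain ⟨E, i, p, hip, hp⟩ := h
  obtain ⟨E', i', p', hip', hp'⟩ := h'
  obtain ⟨u, hu⟩ := hp.exists_comp_eq E' hp'.injective_domain p'
  obtain ⟨v, hv⟩ := hp'.exists_comp_eq E hp.injective_domain p
  exact ⟨E', E, hp'.injective_domain, hp.injective_domain,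
    nonempty_prod_equiv_prod_of_comp_eq hip hip' hu hv⟩

end IsPrecoverSyzygy

namespace StablyEquivalent

variable (R Y) in
theorem refl : StablyEquivalent R Y Y :=
  have : Module.Injective R PUnit.{u + 1} := ⟨fun _ _ _ _ _ _ _ _ _ ↦ ⟨0, fun _ ↦ rfl⟩⟩
  ⟨.of R PUnit, .of R PUnit, this, this, ⟨.refl R _⟩⟩

theorem syzygy (h : StablyEquivalent R Y Y') (hK : IsPrecoverSyzygy R K Y)
    (hK' : IsPrecoverSyzygy R K' Y') : StablyEquivalent R K K' := by
  obtain ⟨I, I', hI, hI', ⟨e⟩⟩ := h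
  exact ((hK.prod_injective hI).congr e).stablyEquivalent (hK'.prod_injective hI')

theorem exists_surjective_isInjectivePrecover (h : StablyEquivalent R Y Y')
    (hK' : IsPrecoverSyzygy R K' Y') : ∃ (E : ModuleCat.{u} R) (p : E →ₗ[R] Y),
      Function.Surjective p ∧ IsInjectivePrecover p := by
  obtain ⟨I, I', -, hI', ⟨e⟩⟩ := h
  obtain ⟨E, i, p, hip, hp⟩ := (hK'.prod_injective hI').congr e.symm
  exact ⟨E, LinearMap.fst R Y I ∘ₗ p, Prod.fst_surjective.comp hip.surjective,
    hp.comp_of_comp_eq_id (LinearMap.fst_comp_inl R Y I)⟩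

end StablyEquivalent

end PrecoverSyzygy

section Descent

variable {R S : Type u} [CommRing R] [CommRing S] [IsNoetherianRing S] [Algebra R S]
  [Module.FaithfullyFlat R S]

theorem exists_isFlatSyzygy_of_isInjectivePrecover {X : ModuleCat.{u} R} {E : Type u}
    [AddCommGroup E] [Module S E] {p : E →ₗ[S] CharacterModule (S ⊗[R] X)}
    (hp : IsInjectivePrecover p) (hp' : Function.Surjective p) :
    ∃ D : ModuleCat.{u} R, IsFlatSyzygy R X D := by
  let W := CharacterModule E
  let _ : Module R W := .compHom W (algebraMap R S)
  have : IsScalarTower R S W := .of_algebraMap_smul fun _ _ ↦ rfl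
  have : Module.Flat S W := flat_characterModule_of_injective hp.injective_domain
  let a : S ⊗[R] X →ₗ[S] W := CharacterModule.dual p ∘ₗ characterModuleEval S (S ⊗[R] X)
  have a_injective : Function.Injective a :=
    (CharacterModule.dual_injective_of_surjective p hp').comp (characterModuleEval_injective S _)
  let f : X →ₗ[R] W := a.restrictScalars R ∘ₗ TensorProduct.mk R S X 1
  have f_injective : Function.Injective f :=
    a_injective.comp (Module.FaithfullyFlat.tensorProduct_mk_injective X)
  exact ⟨.of R (W ⧸ LinearMap.range f), .of R W, f, (LinearMap.range f).mkQ,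
    .mkQ_range f_injective, Module.Flat.trans R S W,
    hp.isInjectivelyPure_dual_comp_eval.comp_mk_one⟩

theorem hasInfinitePath_isFlatSyzygy_of_baseChange {M : ModuleCat.{u} R}
    (h : HasInfinitePath (IsFlatSyzygy S) (.of S (S ⊗[R] M))) :
    HasInfinitePath (IsFlatSyzygy R) M := by
  refine .of_forall_exists (fun X : ModuleCat.{u} R ↦ ∃ N : ModuleCat.{u} S,
    HasInfinitePath (IsFlatSyzygy S) N ∧
      StablyEquivalent S (CharacterModule (S ⊗[R] X)) (CharacterModule N)) ?_ ⟨_, h, .refl S _⟩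
  rintro X ⟨N, hN, hXN⟩
  obtain ⟨N', hNN', hN'⟩ := hN.exists_next
  have dual_N' := hNN'.isPrecoverSyzygy_characterModule
  obtain ⟨E, p, hp, hp'⟩ := hXN.exists_surjective_isInjectivePrecover dual_N'
  obtain ⟨D, hD⟩ := exists_isFlatSyzygy_of_isInjectivePrecover hp' hp
  exact ⟨D, hD, N', hN', hXN.syzygy hD.baseChange.isPrecoverSyzygy_characterModule dual_N'⟩

end Descent

theorem isGorensteinFlat_iff_baseChange_isGorensteinFlat_and_tor_vanishing
    (R S : Type u) [CommRing R] [CommRing S] [IsNoetherianRing R] [IsNoetherianRing S]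
    [Algebra R S] [Module.FaithfullyFlat R S]
    (M : Type u) [AddCommGroup M] [Module R M] :
    IsGorensteinFlat R M ↔
      (IsGorensteinFlat S (S ⊗[R] M) ∧
        ∀ (E : Type u) [AddCommGroup E] [Module R E], Module.Injective R E →
          ∀ i : ℕ, 1 ≤ i →
            Subsingleton (((Tor (ModuleCat.{u} R) i).obj
              (ModuleCat.of R E)).obj (ModuleCat.of R M))) := by
  rw [isGorensteinFlat_iff_hasInfinitePath, isGorensteinFlat_iff_hasInfinitePath,
    ← hasInfinitePath_flip_isFlatSyzygy_iff_subsingleton_tor]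
  constructor
  · rintro ⟨right, left⟩
    let baseChange (X : ModuleCat.{u} R) : ModuleCat.{u} S := .of S (S ⊗[R] X)
    exact ⟨⟨right.map baseChange fun _ _ h ↦ h.baseChange,
      left.map baseChange fun _ _ h ↦ IsFlatSyzygy.baseChange h⟩, left⟩
  · rintro ⟨⟨right, -⟩, left⟩
    exact ⟨hasInfinitePath_isFlatSyzygy_of_baseChange right, left⟩
end
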